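/- arXiv:1701.07084 — 2 statements merged into one kernel-verified Lean document; each statement's English description precedes it below -/
import Mathlib

section
/- Let X be an infinite-dimensional Banach space (over ℝ or ℂ) and p ∈ [1,2]. Suppose X has type p with constant K (that is, 𝔼‖Σ_{i=1}^n ε_i x_i‖ ≤ K (Σ_{i=1}^n ‖x_i‖^p)^{1/p} for all finite sequences x₁, …, xₙ ∈ X), and suppose that for every q with p < q ≤ 2, X does not have type q (so that the supremum p_X of the types of X equals p). Then for every n ≥ 1 one has n^{1/p} ≤ β_n(X) ≤ K · n^{1/p}. -/
/-- The Rademacher average `𝔼 ‖∑ εᵢ xᵢ‖`: the average over all `2ⁿ` choices of signs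
`εᵢ = ±1` of the norm of `∑ εᵢ xᵢ`. -/
noncomputable def rademacherAvg {X : Type*} [NormedAddCommGroup X]
    (n : ℕ) (x : Fin n → X) : ℝ :=
  ((2 : ℝ) ^ n)⁻¹ * ∑ ε : Fin n → Bool, ‖∑ i, (if ε i then x i else -x i)‖

/-- `β_n(X)`: the supremum of `𝔼 ‖∑_{i=1}^n εᵢ xᵢ‖` over all `x₁, …, xₙ` in the closed
unit ball of `X`. -/
noncomputable def betaN (X : Type*) [NormedAddCommGroup X] (n : ℕ) : ℝ :=
  sSup {r : ℝ | ∃ x : Fin n → X, (∀ i, ‖x i‖ ≤ 1) ∧ r = rademacherAvg n x}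

/-- `X` has (Rademacher) type `p` with constant `K`:
`𝔼 ‖∑ εᵢ xᵢ‖ ≤ K (∑ ‖xᵢ‖^p)^{1/p}` for all finite sequences of vectors. -/
def HasTypeWith (X : Type*) [NormedAddCommGroup X] (p K : ℝ) : Prop :=
  ∀ (n : ℕ) (x : Fin n → X), rademacherAvg n x ≤ K * (∑ i, ‖x i‖ ^ p) ^ (1 / p)

open Finset BigOperators

set_option linter.unusedSectionVars false

namespace RA

def sg (b : Bool) : ℝ := if b then 1 else -1

lemma sg_mul_self (b : Bool) : sg b * sg b = 1 := by cases b <;> simp [sg]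
lemma sg_abs (b : Bool) : |sg b| = 1 := by cases b <;> simp [sg]
lemma sg_not (b : Bool) : sg (!b) = - sg b := by cases b <;> simp [sg]
lemma sg_beq (a b : Bool) : sg (a == b) = sg a * sg b := by cases a <;> cases b <;> simp [sg]

section
variable {X : Type*} [NormedAddCommGroup X] [NormedSpace ℝ X]
variable {ι κ : Type*} [Fintype ι] [DecidableEq ι] [Fintype κ] [DecidableEq κ]

/-- signed sum -/
noncomputable def T (x : ι → X) (ε : ι → Bool) : X := ∑ i, sg (ε i) • x i

noncomputable def F (x : ι → X) : ℝ := 𝔼 ε : ι → Bool, ‖T x ε‖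

lemma rad_eq (n : ℕ) (x : Fin n → X) : rademacherAvg n x = F x := by
  unfold rademacherAvg F T
  rw [Fintype.expect_eq_sum_div_card, div_eq_inv_mul]
  congr 1
  · simp
  · refine Finset.sum_congr rfl fun ε _ => ?_
    congr 1
    refine Finset.sum_congr rfl fun i _ => ?_
    cases ε i <;> simp [sg]

lemma F_nonneg (x : ι → X) : 0 ≤ F x := Finset.expect_nonneg fun _ _ => norm_nonneg _

lemma T_equiv (e : ι ≃ κ) (x : κ → X) (ε : κ → Bool) : T (x ∘ e) (ε ∘ e) = T x ε :=
  Equiv.sum_comp e (fun i => sg (ε i) • x i)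

lemma F_equiv (e : ι ≃ κ) (x : κ → X) : F (x ∘ e) = F x := by
  unfold F
  refine (Fintype.expect_equiv (e.arrowCongr (Equiv.refl Bool)).symm _ _ fun ε => ?_).symm
  rw [← T_equiv e]; rfl

lemma F_le_sum (x : ι → X) : F x ≤ ∑ i, ‖x i‖ := by
  refine Finset.expect_le Finset.univ_nonempty fun ε _ => ?_
  refine (norm_sum_le _ _).trans (Finset.sum_le_sum fun i _ => ?_)
  rw [norm_smul, Real.norm_eq_abs, sg_abs, one_mul]

lemma T_smul (c : ℝ) (x : ι → X) (ε : ι → Bool) : T (fun i => c • x i) ε = c • T x ε := by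
  simp only [T, Finset.smul_sum]
  exact Finset.sum_congr rfl fun i _ => smul_comm _ _ _

lemma F_smul (c : ℝ) (x : ι → X) : F (fun i => c • x i) = |c| * F x := by
  simp only [F, T_smul, norm_smul, Real.norm_eq_abs, Finset.mul_expect]

/-- restriction to the support -/
lemma F_restrict (P : ι → Prop) [DecidablePred P] (x : ι → X) (h : ∀ i, ¬ P i → x i = 0) :
    F x = F (fun i : {i // P i} => x i) := by
  have key : F x = 𝔼 z : ({i // P i} → Bool) × ({i // ¬ P i} → Bool),
      ‖T (fun i : {i // P i} => x i) z.1‖ := by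
    refine Fintype.expect_equiv (Equiv.piEquivPiSubtypeProd P (fun _ => Bool)) _ _ fun ε => ?_
    congr 1
    simp only [T]
    rw [← Fintype.sum_subtype_add_sum_subtype P]
    rw [Finset.sum_eq_zero (s := (univ : Finset {i // ¬ P i})) (fun i _ => by simp [h i.1 i.2]), add_zero]
    rfl
  rw [key, ← Finset.univ_product_univ, Finset.expect_product]
  refine Finset.expect_congr rfl fun z _ => ?_
  exact Fintype.expect_const (ι := {i // ¬ P i} → Bool) (‖T (fun i : {i // P i} => x i) z‖)

lemma beta_bdd (n : ℕ) :
    BddAbove {r : ℝ | ∃ x : Fin n → X, (∀ i, ‖x i‖ ≤ 1) ∧ r = rademacherAvg n x} := by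
  refine ⟨n, ?_⟩
  rintro r ⟨x, hx, rfl⟩
  rw [rad_eq]
  refine (F_le_sum x).trans ((Finset.sum_le_sum fun i _ => hx i).trans ?_)
  simp

lemma F_le_beta_fin (n : ℕ) (x : Fin n → X) (hx : ∀ i, ‖x i‖ ≤ 1) : F x ≤ betaN X n :=
  le_csSup (beta_bdd n) ⟨x, hx, (rad_eq n x).symm⟩

lemma beta_nonneg (n : ℕ) : 0 ≤ betaN X n :=
  (F_nonneg _).trans (F_le_beta_fin n (fun _ => (0 : X)) (by simp))

lemma beta_le {n : ℕ} {B : ℝ} (h : ∀ x : Fin n → X, (∀ i, ‖x i‖ ≤ 1) → F x ≤ B) :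
    betaN X n ≤ B := by
  refine csSup_le ⟨_, fun _ => 0, by simp, rfl⟩ ?_
  rintro r ⟨x, hx, rfl⟩
  rw [rad_eq]; exact h x hx

lemma F_le_beta {n : ℕ} (hn : Fintype.card ι ≤ n) (x : ι → X) (hx : ∀ i, ‖x i‖ ≤ 1) :
    F x ≤ betaN X n := by
  classical
  obtain ⟨e⟩ : Nonempty (ι ↪ Fin n) := by
    apply Function.Embedding.nonempty_of_card_le; simpa using hn
  have h1 : F (Function.extend e x 0) = F x := by
    let E : ι ≃ {j // ∃ i, e i = j} := Equiv.ofInjective e e.injective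
    rw [F_restrict (fun j => ∃ i, e i = j)]
    · rw [← F_equiv E (fun i : {j // ∃ i, e i = j} => Function.extend e x 0 i)]
      congr 1
      funext i
      exact e.injective.extend_apply x 0 i
    · intro i hi
      rw [Function.extend_apply' _ _ _ (by simpa using hi)]; rfl
  rw [← h1]
  apply F_le_beta_fin
  intro j
  by_cases hj : ∃ i, e i = j
  · obtain ⟨i, rfl⟩ := hj
    rw [e.injective.extend_apply]; exact hx i
  · rw [Function.extend_apply' _ _ _ hj]; simp

lemma F_le_beta_mul {n : ℕ} (hn : Fintype.card ι ≤ n) (x : ι → X) {R : ℝ} (hR : 0 ≤ R)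
    (hx : ∀ i, ‖x i‖ ≤ R) : F x ≤ betaN X n * R := by
  rcases hR.eq_or_lt with rfl | hR
  · have : F x ≤ 0 := (F_le_sum x).trans (Finset.sum_nonpos fun i _ => hx i)
    simpa using this
  · have h := F_le_beta hn (fun i => R⁻¹ • x i) (fun i => by
      rw [norm_smul, norm_inv, Real.norm_of_nonneg hR.le, inv_mul_le_iff₀ hR]; simpa using hx i)
    rw [F_smul, abs_of_pos (inv_pos.2 hR), inv_mul_le_iff₀ hR] at h
    linarith

lemma beta_mono {m n : ℕ} (h : m ≤ n) : betaN X m ≤ betaN X n :=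
  beta_le fun x hx => F_le_beta (by simpa using h) x hx

/-- sign invariance -/
lemma F_sign (δ : ι → Bool) (x : ι → X) : F (fun i => sg (δ i) • x i) = F x := by
  unfold F
  have hb : Function.Bijective (fun (ε : ι → Bool) i => (δ i == ε i)) := by
    apply Function.Involutive.bijective
    intro ε; funext i; dsimp; cases δ i <;> cases ε i <;> rfl
  refine Fintype.expect_bijective _ hb _ _ fun ε => ?_
  congr 1
  refine Finset.sum_congr rfl fun i _ => ?_
  rw [smul_smul, sg_beq, mul_comm]

lemma F_abs (s : ι → ℝ) (x : ι → X) : F (fun i => s i • x i) = F (fun i => |s i| • x i) := by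
  rw [← F_sign (fun i => decide (0 ≤ s i)) (fun i => |s i| • x i)]
  congr 1; funext i
  rw [smul_smul]
  congr 1
  by_cases h : 0 ≤ s i
  · simp [sg, h, abs_of_nonneg]
  · simp [sg, h, abs_of_neg (not_le.1 h)]

/-- decoupling into blocks -/
lemma F_prod (x : ι → κ → X) :
    F (fun z : ι × κ => x z.1 z.2) = 𝔼 η : ι → κ → Bool, F (fun i => T (x i) (η i)) := by
  have h1 : ∀ δ : ι → Bool, F (fun z : ι × κ => x z.1 z.2) =
      𝔼 η : ι → κ → Bool, ‖∑ i, sg (δ i) • T (x i) (η i)‖ := by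
    intro δ
    rw [← F_sign (fun z : ι × κ => δ z.1)]
    refine Fintype.expect_equiv (Equiv.curry ι κ Bool) _ _ fun ε => ?_
    congr 1
    simp only [T, Fintype.sum_prod_type, Finset.smul_sum]
    refine Finset.sum_congr rfl fun i _ => Finset.sum_congr rfl fun j _ => ?_
    rw [smul_comm]; rfl
  simp only [F] at h1 ⊢
  rw [Finset.expect_comm]
  rw [← Fintype.expect_const (ι := ι → Bool) (𝔼 ε : ι × κ → Bool, ‖T (fun z : ι × κ => x z.1 z.2) ε‖)]
  exact Finset.expect_congr rfl fun δ _ => h1 δ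

lemma expect_eval {Ω : Type*} [Fintype Ω] [Nonempty Ω] (i : ι) (g : Ω → ℝ) :
    𝔼 η : ι → Ω, g (η i) = 𝔼 ω, g ω := by
  classical
  have : 𝔼 η : ι → Ω, g (η i) = 𝔼 z : Ω × ({j // j ≠ i} → Ω), g z.1 :=
    Fintype.expect_equiv (Equiv.funSplitAt i Ω) _ _ fun η => rfl
  rw [this, ← Finset.univ_product_univ, Finset.expect_product]
  exact Finset.expect_congr rfl fun z _ => Fintype.expect_const (ι := {j // j ≠ i} → Ω) (g z)

lemma norm_expect_le {Ω : Type*} [Fintype Ω] (f : Ω → X) (w : ℝ) (hw : 0 ≤ w) :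
    ‖w • ∑ i, f i‖ ≤ w * ∑ i, ‖f i‖ := by
  rw [norm_smul, Real.norm_of_nonneg hw]
  exact mul_le_mul_of_nonneg_left (norm_sum_le _ _) hw

lemma expect_cons (m : ℕ) (f : (Fin (m+1) → Bool) → ℝ) :
    𝔼 ε, f ε = 𝔼 ε : Fin m → Bool, (f (Fin.cons true ε) + f (Fin.cons false ε)) / 2 := by
  have : 𝔼 ε, f ε = 𝔼 z : Bool × (Fin m → Bool), f (Fin.cons z.1 z.2) :=
    (Fintype.expect_equiv (Fin.consEquiv (fun _ : Fin (m+1) => Bool)) _ _ fun η => rfl).symm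
  rw [this, ← Finset.univ_product_univ, Finset.expect_product, Finset.expect_comm]
  refine Finset.expect_congr rfl fun z _ => ?_
  rw [Fintype.expect_eq_sum_div_card]
  simp

end
end RA

namespace RA
section
variable {X : Type*} [NormedAddCommGroup X] [NormedSpace ℝ X]
variable {ι κ : Type*} [Fintype ι] [DecidableEq ι] [Fintype κ] [DecidableEq κ]

lemma jensen_sq {Ω : Type*} [Fintype Ω] [Nonempty Ω] (h : Ω → ℝ) :
    (𝔼 ω, h ω) ^ 2 ≤ 𝔼 ω, h ω ^ 2 := by
  have := Finset.expect_mul_sq_le_sq_mul_sq Finset.univ h (fun _ => (1 : ℝ))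
  simpa using this

def flip (ε : ι → Bool) (j : ι) : ι → Bool := Function.update ε j (!ε j)

lemma efron_fin (m : ℕ) : ∀ f : (Fin m → Bool) → ℝ,
    𝔼 ε, f ε ^ 2 - (𝔼 ε, f ε) ^ 2 ≤ (1 / 4) * ∑ j, 𝔼 ε, (f ε - f (flip ε j)) ^ 2 := by
  induction m with
  | zero =>
    intro f
    simp
  | succ m ih =>
    intro f
    have h0 := ih (fun ε => f (Fin.cons true ε))
    have h1 := ih (fun ε => f (Fin.cons false ε))
    have hj := jensen_sq (fun ε : Fin m → Bool => f (Fin.cons true ε) - f (Fin.cons false ε))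
    rw [Finset.expect_sub_distrib] at hj
    have a0 : ∀ (b : Bool) (ε : Fin m → Bool), flip (Fin.cons b ε : Fin (m+1) → Bool) 0 = Fin.cons (!b) ε := by
      intro b ε; simp [flip, Fin.update_cons_zero]
    have a1 : ∀ (b : Bool) (ε : Fin m → Bool) (j : Fin m),
        flip (Fin.cons b ε : Fin (m+1) → Bool) j.succ = Fin.cons b (flip ε j) := by
      intro b ε j
      simp [flip, Fin.cons_update]
    rw [Fin.sum_univ_succ]
    simp only [expect_cons m, a0, a1, Bool.not_true, Bool.not_false]
    have e2 : ∀ u v : (Fin m → Bool) → ℝ, 𝔼 ε, (u ε + v ε) / 2 = (𝔼 ε, u ε + 𝔼 ε, v ε) / 2 := by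
      intro u v
      rw [← Finset.expect_div, Finset.expect_add_distrib]
    simp only [e2]
    have e3 : 𝔼 ε : Fin m → Bool, (f (Fin.cons false ε) - f (Fin.cons true ε)) ^ 2 =
      𝔼 ε : Fin m → Bool, (f (Fin.cons true ε) - f (Fin.cons false ε)) ^ 2 :=
      Finset.expect_congr rfl fun ε _ => by ring
    rw [e3, ← Finset.sum_div, Finset.sum_add_distrib]
    nlinarith

lemma efron (f : (κ → Bool) → ℝ) :
    𝔼 ε, f ε ^ 2 - (𝔼 ε, f ε) ^ 2 ≤ (1 / 4) * ∑ j, 𝔼 ε, (f ε - f (flip ε j)) ^ 2 := by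
  let e := Fintype.equivFin κ
  have h := efron_fin (Fintype.card κ) (fun ε => f (ε ∘ e))
  let E : (Fin (Fintype.card κ) → Bool) ≃ (κ → Bool) := e.symm.arrowCongr (Equiv.refl Bool)
  have t : ∀ g : (κ → Bool) → ℝ, 𝔼 ε : Fin (Fintype.card κ) → Bool, g (ε ∘ e) = 𝔼 ε, g ε :=
    fun g => Fintype.expect_equiv E _ _ fun ε => rfl
  have hf : ∀ (ε : Fin (Fintype.card κ) → Bool) (j : κ), flip ε (e j) ∘ e = flip (ε ∘ e) j := by
    intro ε j; funext i
    simp only [flip, Function.comp, Function.update_apply, e.injective.eq_iff]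
  rw [← Equiv.sum_comp e] at h
  simp only [hf] at h
  rw [t (fun ε => f ε ^ 2), t f] at h
  refine h.trans (le_of_eq ?_)
  congr 1
  exact Finset.sum_congr rfl fun j _ => t (fun ε => (f ε - f (flip ε j)) ^ 2)

lemma flip_flip (ε : ι → Bool) (j : ι) : flip (flip ε j) j = ε := by
  funext i
  simp only [flip, Function.update_apply]
  split_ifs with h
  · subst h; simp
  · rfl

lemma sq_eq_pos (f : (κ → Bool) → ℝ) (j : κ) :
    𝔼 ε, (f ε - f (flip ε j)) ^ 2 = 2 * 𝔼 ε, (max (f ε - f (flip ε j)) 0) ^ 2 := by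
  have h1 : 𝔼 ε, (max (f ε - f (flip ε j)) 0) ^ 2 = 𝔼 ε, (max (f (flip ε j) - f ε) 0) ^ 2 := by
    refine Fintype.expect_bijective (fun ε => flip ε j)
      (Function.Involutive.bijective fun ε => flip_flip ε j) _ _ fun ε => ?_
    rw [flip_flip]
  rw [two_mul]
  nth_rewrite 2 [h1]
  rw [← Finset.expect_add_distrib]
  refine Finset.expect_congr rfl fun ε _ => ?_
  rcases le_total (f ε) (f (flip ε j)) with h | h
  · rw [max_eq_right (by linarith), max_eq_left (by linarith)]; ring
  · rw [max_eq_left (by linarith), max_eq_right (by linarith)]; ring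

/-- weak ℓ2 bound -/
def W2 (σ : ℝ) (x : κ → X) : Prop := ∀ a : κ → ℝ, ‖∑ j, a j • x j‖ ^ 2 ≤ σ ^ 2 * ∑ j, a j ^ 2

lemma W2.dual {σ : ℝ} {x : κ → X} (h : W2 σ x) (φ : X →L[ℝ] ℝ) (hφ : ‖φ‖ ≤ 1) :
    ∑ j, φ (x j) ^ 2 ≤ σ ^ 2 := by
  set S := ∑ j, φ (x j) ^ 2 with hS
  have hS0 : 0 ≤ S := Finset.sum_nonneg fun _ _ => sq_nonneg _
  have h1 := h (fun j => φ (x j))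
  have h2 : φ (∑ j, φ (x j) • x j) = S := by
    rw [map_sum, hS]
    exact Finset.sum_congr rfl fun j _ => by rw [map_smul, smul_eq_mul, sq]
  have h3 : S ≤ ‖∑ j, φ (x j) • x j‖ := by
    rw [← h2]
    exact (le_abs_self _).trans ((φ.le_opNorm _).trans (mul_le_of_le_one_left (norm_nonneg _) hφ))
  rcases hS0.eq_or_lt with h0 | h0
  · rw [← h0]; positivity
  · have : S * S ≤ σ ^ 2 * S := by nlinarith
    exact le_of_mul_le_mul_right this h0

lemma T_flip (x : κ → X) (ε : κ → Bool) (j : κ) : T x (flip ε j) = T x ε - (2 * sg (ε j)) • x j := by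
  have : T x ε - T x (flip ε j) = (2 * sg (ε j)) • x j := by
    unfold T
    rw [← Finset.sum_sub_distrib, Finset.sum_eq_single j]
    · simp only [flip, Function.update_self, sg_not]
      rw [← sub_smul]; congr 1; ring
    · intro b _ hb
      simp [flip, Function.update_of_ne hb]
    · simp
  rw [← this]; abel

lemma variance_bound {σ : ℝ} {x : κ → X} (h : W2 σ x) :
    𝔼 ε, ‖T x ε‖ ^ 2 - (F x) ^ 2 ≤ 2 * σ ^ 2 := by
  refine (efron (fun ε => ‖T x ε‖)).trans ?_
  simp only [sq_eq_pos (fun ε => ‖T x ε‖)]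
  rw [← Finset.mul_sum, ← Finset.expect_sum_comm]
  have : 𝔼 ε, ∑ j, (max (‖T x ε‖ - ‖T x (flip ε j)‖) 0) ^ 2 ≤ 4 * σ ^ 2 := by
    refine Finset.expect_le Finset.univ_nonempty fun ε _ => ?_
    obtain ⟨φ, hφ, hφ2⟩ := exists_dual_vector'' ℝ (T x ε)
    have hφ3 : φ (T x ε) = ‖T x ε‖ := by simpa using hφ2
    have : ∀ j, (max (‖T x ε‖ - ‖T x (flip ε j)‖) 0) ^ 2 ≤ 4 * φ (x j) ^ 2 := by
      intro j
      have h1 : φ (T x (flip ε j)) ≤ ‖T x (flip ε j)‖ :=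
        (le_abs_self _).trans ((φ.le_opNorm _).trans (mul_le_of_le_one_left (norm_nonneg _) hφ))
      rw [T_flip, map_sub, map_smul, smul_eq_mul, ← T_flip, hφ3] at h1
      have h2 : max (‖T x ε‖ - ‖T x (flip ε j)‖) 0 ≤ |2 * sg (ε j) * φ (x j)| := by
        apply max_le _ (abs_nonneg _)
        exact le_trans (by linarith) (le_abs_self _)
      calc _ ≤ |2 * sg (ε j) * φ (x j)| ^ 2 := pow_le_pow_left₀ (le_max_right _ _) h2 2
        _ = 4 * (sg (ε j) * sg (ε j)) * φ (x j) ^ 2 := by rw [sq_abs]; ring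
        _ = _ := by rw [sg_mul_self]; ring
    calc _ ≤ ∑ j, 4 * φ (x j) ^ 2 := Finset.sum_le_sum fun j _ => this j
      _ ≤ _ := by rw [← Finset.mul_sum]; linarith [h.dual φ hφ]
  linarith

lemma dev_bound {σ : ℝ} (hσ : 0 ≤ σ) {x : κ → X} (h : W2 σ x) :
    𝔼 ε, |‖T x ε‖ - F x| ≤ 2 * σ := by
  have h1 := jensen_sq (fun ε : κ → Bool => |‖T x ε‖ - F x|)
  have h2 : 𝔼 ε, |‖T x ε‖ - F x| ^ 2 = 𝔼 ε, ‖T x ε‖ ^ 2 - (F x) ^ 2 := by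
    have : ∀ ε, |‖T x ε‖ - F x| ^ 2 = ‖T x ε‖ ^ 2 - 2 * F x * ‖T x ε‖ + F x ^ 2 := by
      intro ε; rw [sq_abs]; ring
    simp only [this]
    rw [Finset.expect_add_distrib, Finset.expect_sub_distrib, ← Finset.mul_expect,
      Fintype.expect_const]
    change _ - 2 * F x * F x + _ = _
    ring
  rw [h2] at h1
  have h3 := variance_bound h
  apply le_of_sq_le_sq₀' _ (by positivity)
  nlinarith
where
  le_of_sq_le_sq₀' {a b : ℝ} (h : a ^ 2 ≤ b ^ 2) (hb : 0 ≤ b) : a ≤ b := (le_abs_self a).trans (abs_le_of_sq_le_sq h hb)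

lemma key {n : ℕ} (hn : Fintype.card ι ≤ n) (x : ι → κ → X) {A σ : ℝ} (hA : 0 ≤ A) (hσ : 0 ≤ σ)
    (hF : ∀ i, F (x i) ≤ A) (hW : ∀ i, W2 σ (x i)) :
    F (fun z : ι × κ => x z.1 z.2) ≤ betaN X n * (A + n * (2 * σ)) := by
  rw [F_prod]
  calc _ ≤ 𝔼 η : ι → κ → Bool, betaN X n * (A + ∑ i, |‖T (x i) (η i)‖ - F (x i)|) := by
        refine Finset.expect_le_expect fun η _ => ?_
        have h0 : ∀ i, 0 ≤ |‖T (x i) (η i)‖ - F (x i)| := fun i => abs_nonneg _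
        refine F_le_beta_mul hn _ (add_nonneg hA (Finset.sum_nonneg fun i _ => h0 i)) fun i => ?_
        have h1 := Finset.single_le_sum (f := fun i => |‖T (x i) (η i)‖ - F (x i)|)
          (fun i _ => h0 i) (Finset.mem_univ i)
        have h2 := le_abs_self (‖T (x i) (η i)‖ - F (x i))
        have h3 := hF i
        linarith
    _ = betaN X n * (A + ∑ i, 𝔼 ε : κ → Bool, |‖T (x i) ε‖ - F (x i)|) := by
        rw [← Finset.mul_expect, Finset.expect_add_distrib, Fintype.expect_const,
          Finset.expect_sum_comm]
        congr 2
        exact Finset.sum_congr rfl fun i _ => expect_eval i (fun ε => |‖T (x i) ε‖ - F (x i)|)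
    _ ≤ _ := by
        apply mul_le_mul_of_nonneg_left _ (beta_nonneg n)
        have : ∑ i, 𝔼 ε : κ → Bool, |‖T (x i) ε‖ - F (x i)| ≤ ∑ i : ι, 2 * σ :=
          Finset.sum_le_sum fun i _ => dev_bound hσ (hW i)
        have h2 : ∑ i : ι, 2 * σ ≤ n * (2 * σ) := by
          rw [Finset.sum_const, nsmul_eq_mul]
          apply mul_le_mul_of_nonneg_right _ (by positivity)
          exact_mod_cast hn
        linarith

end
end RA

namespace RA
section
variable {X : Type*} [NormedAddCommGroup X] [NormedSpace ℝ X]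
variable {ι κ : Type*} [Fintype ι] [DecidableEq ι] [Fintype κ] [DecidableEq κ]

lemma W2_unit (x : κ → X) (hx : ∀ j, ‖x j‖ ≤ 1) : W2 (√(Fintype.card κ)) x := by
  intro a
  rw [Real.sq_sqrt (Nat.cast_nonneg _)]
  have h1 : ‖∑ j, a j • x j‖ ≤ ∑ j, |a j| := by
    refine (norm_sum_le _ _).trans (Finset.sum_le_sum fun j _ => ?_)
    rw [norm_smul, Real.norm_eq_abs]
    exact mul_le_of_le_one_right (abs_nonneg _) (hx j)
  refine (pow_le_pow_left₀ (norm_nonneg _) h1 2).trans ?_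
  refine (sq_sum_le_card_mul_sum_sq (s := Finset.univ) (f := fun j => |a j|)).trans ?_
  simp

lemma beta_mul (n m : ℕ) :
    betaN X (n * m) ≤ betaN X n * (betaN X m + n * (2 * √m)) := by
  refine beta_le fun x hx => ?_
  rw [← F_equiv finProdFinEquiv]
  refine key (ι := Fin n) (κ := Fin m) (n := n) (by simp) (fun i j => x (finProdFinEquiv (i, j)))
    (beta_nonneg m) (Real.sqrt_nonneg _) (fun i => ?_) (fun i => ?_)
  · exact F_le_beta_fin m _ fun j => hx _
  · have := W2_unit (fun j : Fin m => x (finProdFinEquiv (i, j))) fun j => hx _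
    simpa using this

lemma beta_zero : betaN X 0 ≤ 0 := beta_le fun x _ => (F_le_sum x).trans (by simp)

lemma growth {n : ℕ} (hn : 2 ≤ n) {t : ℝ} (ht : 1 / 2 ≤ t) (h : betaN X n < (n : ℝ) ^ t) :
    ∃ D : ℝ, 0 ≤ D ∧ ∀ m : ℕ, betaN X m ≤ D * (m : ℝ) ^ t := by
  have hn0 : (0 : ℝ) < n := by positivity
  have hnt : 0 < (n : ℝ) ^ t := Real.rpow_pos_of_pos hn0 _
  set ρ := betaN X n / (n : ℝ) ^ t with hρ
  have hρ0 : 0 ≤ ρ := div_nonneg (beta_nonneg n) hnt.le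
  have hρ1 : ρ < 1 := (div_lt_one hnt).2 h
  have hβ : betaN X n = ρ * (n : ℝ) ^ t := by rw [hρ]; field_simp
  set D := max (betaN X 1) (2 * n * ρ / (1 - ρ)) with hD
  have hD0 : 0 ≤ D := le_max_of_le_left (beta_nonneg 1)
  have hD1 : ρ * (D + 2 * n) ≤ D := by
    have : 2 * n * ρ / (1 - ρ) ≤ D := le_max_right _ _
    rw [div_le_iff₀ (by linarith)] at this
    linarith
  have hk : ∀ k : ℕ, betaN X (n ^ k) ≤ D * ((n : ℝ) ^ t) ^ k := by
    intro k
    induction k with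
    | zero => simp [hD]
    | succ k ih =>
      have hs : √((n ^ k : ℕ) : ℝ) ≤ ((n : ℝ) ^ t) ^ k := by
        rw [Nat.cast_pow, Real.sqrt_eq_rpow, ← Real.rpow_natCast, ← Real.rpow_mul hn0.le,
          ← Real.rpow_natCast, ← Real.rpow_mul hn0.le]
        apply Real.rpow_le_rpow_of_exponent_le (by exact_mod_cast (by omega : 1 ≤ n))
        rw [mul_comm]
        exact mul_le_mul_of_nonneg_right ht (Nat.cast_nonneg k)
      rw [pow_succ' n k]
      have hp : 0 ≤ ((n : ℝ) ^ t) ^ k := by positivity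
      calc _ ≤ betaN X n * (betaN X (n ^ k) + n * (2 * √((n ^ k : ℕ) : ℝ))) := beta_mul _ _
        _ ≤ betaN X n * (D * ((n : ℝ) ^ t) ^ k + n * (2 * ((n : ℝ) ^ t) ^ k)) := by
            apply mul_le_mul_of_nonneg_left _ (beta_nonneg n)
            gcongr
        _ = (ρ * (D + 2 * n)) * ((n : ℝ) ^ t) ^ (k + 1) := by rw [hβ]; ring
        _ ≤ _ := by gcongr
  refine ⟨D * (n : ℝ) ^ t, by positivity, fun m => ?_⟩
  rcases Nat.eq_zero_or_pos m with rfl | hm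
  · rw [Nat.cast_zero, Real.zero_rpow (by linarith), mul_zero]; exact beta_zero
  · have h1 : n ^ (Nat.log n m) ≤ m := Nat.pow_log_le_self n hm.ne'
    have h2 : m < n ^ (Nat.log n m + 1) := Nat.lt_pow_succ_log_self (by omega) m
    calc betaN X m ≤ betaN X (n ^ (Nat.log n m + 1)) := beta_mono h2.le
      _ ≤ _ := hk _
      _ = D * (n : ℝ) ^ t * ((n : ℝ) ^ t) ^ Nat.log n m := by ring
      _ ≤ _ := by
        apply mul_le_mul_of_nonneg_left _ (by positivity)
        rw [← Real.rpow_natCast, ← Real.rpow_mul hn0.le, mul_comm, Real.rpow_mul hn0.le,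
          Real.rpow_natCast]
        apply Real.rpow_le_rpow (by positivity) (by exact_mod_cast h1) (by linarith)

lemma F_sum_le {J : Type*} (s : Finset J) (x : J → ι → X) :
    F (fun i => ∑ k ∈ s, x k i) ≤ ∑ k ∈ s, F (x k) := by
  simp only [F]
  rw [← Finset.expect_sum_comm]
  refine Finset.expect_le_expect fun ε _ => ?_
  have : T (fun i => ∑ k ∈ s, x k i) ε = ∑ k ∈ s, T (x k) ε := by
    simp only [T, Finset.smul_sum]
    rw [Finset.sum_comm]
  rw [this]
  exact norm_sum_le _ _

lemma type_aux {D t q : ℝ} (hD : 0 ≤ D) (hq : 0 < q) (ht : 0 ≤ t) (hqt : q * t < 1)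
    (hβ : ∀ m : ℕ, betaN X m ≤ D * (m : ℝ) ^ t) (y : ι → X) (hy : ∑ i, ‖y i‖ ^ q ≤ 1) :
    F y ≤ D * (2 : ℝ) ^ (q * t) * (1 - (2 : ℝ) ^ (q * t - 1))⁻¹ := by
  classical
  have hy1 : ∀ i, ‖y i‖ ≤ 1 := by
    intro i
    by_contra hc
    push Not at hc
    have h1 := Real.one_lt_rpow hc hq
    have h2 := Finset.single_le_sum (f := fun i => ‖y i‖ ^ q) (fun i _ => by positivity) (Finset.mem_univ i)
    linarith
  have hk : ∀ i, ∃ k : ℕ, ‖y i‖ ≤ (1 / 2 : ℝ) ^ k ∧ (y i ≠ 0 → (1 / 2 : ℝ) ^ (k + 1) < ‖y i‖) := by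
    intro i
    by_cases h0 : y i = 0
    · exact ⟨0, by simp [h0], fun h => absurd h0 h⟩
    · obtain ⟨k, h1, h2⟩ := exists_nat_pow_near_of_lt_one (norm_pos_iff.2 h0) (hy1 i)
        (by norm_num : (0:ℝ) < 1 / 2) (by norm_num)
      exact ⟨k, h2, fun _ => h1⟩
  choose k hk1 hk2 using hk
  set N := Finset.univ.sup k + 1 with hN
  let z : ℕ → ι → X := fun l i => if y i ≠ 0 ∧ k i = l then y i else 0
  have hz : y = fun i => ∑ l ∈ Finset.range N, z l i := by
    funext i
    rw [Finset.sum_eq_single (k i)]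
    · simp only [z]; by_cases h : y i = 0 <;> simp [h]
    · intro l _ hl; simp [z, hl.symm]
    · intro h
      exfalso; apply h
      rw [Finset.mem_range, hN]
      exact Nat.lt_succ_of_le (Finset.le_sup (f := k) (Finset.mem_univ i))
  set r := (2 : ℝ) ^ (q * t - 1) with hr
  have hr0 : 0 ≤ r := by positivity
  have hr1 : r < 1 := Real.rpow_lt_one_of_one_lt_of_neg (by norm_num) (by linarith)
  have hz2 : ∀ l, F (z l) ≤ D * (2 : ℝ) ^ (q * t) * r ^ l := by
    intro l
    rw [F_restrict (fun i => y i ≠ 0 ∧ k i = l) (z l) (fun i hi => by simp only [z]; rw [if_neg hi])]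
    set c := Fintype.card {i // y i ≠ 0 ∧ k i = l} with hc
    have h1 : F (fun i : {i // y i ≠ 0 ∧ k i = l} => z l i) ≤ betaN X c * (1 / 2 : ℝ) ^ l := by
      refine F_le_beta_mul le_rfl _ (by positivity) fun i => ?_
      simp only [z]; rw [if_pos i.2]
      have := hk1 i
      rwa [i.2.2] at this
    have h2 : (c : ℝ) * ((1 / 2 : ℝ) ^ (l + 1)) ^ q ≤ 1 := by
      refine le_trans ?_ hy
      have e1 : ∑ i : {i // y i ≠ 0 ∧ k i = l}, ‖y i‖ ^ q ≤ ∑ i, ‖y i‖ ^ q := by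
        rw [← Finset.sum_subtype (Finset.univ.filter fun i => y i ≠ 0 ∧ k i = l) (by simp)
          (fun i => ‖y i‖ ^ q)]
        exact Finset.sum_le_sum_of_subset_of_nonneg (Finset.filter_subset _ _)
          fun _ _ _ => by positivity
      refine le_trans ?_ e1
      have : (c : ℝ) * ((1 / 2 : ℝ) ^ (l + 1)) ^ q =
          ∑ i : {i // y i ≠ 0 ∧ k i = l}, ((1 / 2 : ℝ) ^ (l + 1)) ^ q := by
        rw [Finset.sum_const, nsmul_eq_mul, Finset.card_univ]
      rw [this]
      refine Finset.sum_le_sum fun i _ => ?_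
      apply Real.rpow_le_rpow (by positivity) _ hq.le
      have := hk2 i i.2.1
      rw [i.2.2] at this
      exact this.le
    have h3 : (c : ℝ) ≤ (2 : ℝ) ^ ((l + 1 : ℝ) * q) := by
      have : ((1 / 2 : ℝ) ^ (l + 1)) ^ q = ((2 : ℝ) ^ ((l + 1 : ℝ) * q))⁻¹ := by
        rw [Real.rpow_mul (by norm_num), ← Real.inv_rpow (by positivity)]
        congr 1
        rw [one_div, inv_pow]
        congr 1
        exact_mod_cast (Real.rpow_natCast 2 (l + 1)).symm
      rw [this, ← div_eq_mul_inv, div_le_one (by positivity)] at h2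
      exact h2
    calc _ ≤ betaN X c * (1 / 2 : ℝ) ^ l := h1
      _ ≤ D * ((2 : ℝ) ^ ((l + 1 : ℝ) * q)) ^ t * (1 / 2 : ℝ) ^ l := by
          refine mul_le_mul_of_nonneg_right ((hβ c).trans ?_) (by positivity)
          exact mul_le_mul_of_nonneg_left (Real.rpow_le_rpow (by positivity) h3 ht) hD
      _ = _ := by
          have e : (1 / 2 : ℝ) ^ l = (2 : ℝ) ^ (-(l : ℝ)) := by
            rw [Real.rpow_neg (by norm_num), Real.rpow_natCast]; simp
          rw [e, hr, ← Real.rpow_natCast, ← Real.rpow_mul (by norm_num), ← Real.rpow_mul (by norm_num),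
            mul_assoc, mul_assoc, mul_assoc, ← Real.rpow_add (by norm_num), ← Real.rpow_add (by norm_num)]
          congr 2
          ring
  calc F y = F (fun i => ∑ l ∈ Finset.range N, z l i) := by rw [← hz]
    _ ≤ ∑ l ∈ Finset.range N, F (z l) := F_sum_le _ _
    _ ≤ ∑ l ∈ Finset.range N, D * (2 : ℝ) ^ (q * t) * r ^ l := Finset.sum_le_sum fun l _ => hz2 l
    _ = D * (2 : ℝ) ^ (q * t) * ∑ l ∈ Finset.range N, r ^ l := by rw [Finset.mul_sum]
    _ ≤ _ := by
        apply mul_le_mul_of_nonneg_left _ (by positivity)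
        rw [← tsum_geometric_of_lt_one hr0 hr1]
        exact (summable_geometric_of_lt_one hr0 hr1).sum_le_tsum _ (fun _ _ => by positivity)

lemma type_of_growth {D t q : ℝ} (hD : 0 ≤ D) (hq : 0 < q) (ht : 0 ≤ t) (hqt : q * t < 1)
    (hβ : ∀ m : ℕ, betaN X m ≤ D * (m : ℝ) ^ t) : ∃ K, HasTypeWith X q K := by
  refine ⟨D * (2 : ℝ) ^ (q * t) * (1 - (2 : ℝ) ^ (q * t - 1))⁻¹, fun n x => ?_⟩
  rw [rad_eq]
  set K := D * (2 : ℝ) ^ (q * t) * (1 - (2 : ℝ) ^ (q * t - 1))⁻¹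
  set S := ∑ i, ‖x i‖ ^ q with hS
  have hS0 : 0 ≤ S := Finset.sum_nonneg fun _ _ => by positivity
  rcases hS0.eq_or_lt with h0 | h0
  · have hx : ∀ i, ‖x i‖ = 0 := by
      intro i
      have := (Finset.sum_eq_zero_iff_of_nonneg (fun _ _ => by positivity)).1 (hS ▸ h0).symm i (Finset.mem_univ i)
      exact (Real.rpow_eq_zero (norm_nonneg _) hq.ne').1 this
    rw [← h0, Real.zero_rpow (by positivity), mul_zero]
    exact (F_le_sum x).trans (by simp [hx])
  · set c := S ^ (1 / q) with hc
    have hc0 : 0 < c := by positivity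
    have hcq : c ^ q = S := by
      rw [hc, ← Real.rpow_mul hS0, one_div, inv_mul_cancel₀ hq.ne', Real.rpow_one]
    have h := type_aux hD hq ht hqt hβ (fun i => c⁻¹ • x i) (by
      have : ∀ i, ‖c⁻¹ • x i‖ ^ q = S⁻¹ * ‖x i‖ ^ q := by
        intro i
        rw [norm_smul, norm_inv, Real.norm_of_nonneg hc0.le, Real.mul_rpow (by positivity) (norm_nonneg _),
          Real.inv_rpow hc0.le, hcq]
      simp only [this]
      rw [← Finset.mul_sum, ← hS, inv_mul_cancel₀ h0.ne'])
    rw [F_smul, abs_of_pos (inv_pos.2 hc0), inv_mul_le_iff₀ hc0] at h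
    linarith

end
end RA

namespace RA
section
variable {X : Type*} [NormedAddCommGroup X] [NormedSpace ℝ X]
variable {ι κ : Type*} [Fintype ι] [DecidableEq ι] [Fintype κ] [DecidableEq κ]

open Module in
lemma det_D {V : Type*} [NormedAddCommGroup V] [InnerProductSpace ℝ V] [FiniteDimensional ℝ V]
    (K : Submodule ℝ V) (D : V →ₗ[ℝ] V) (h1 : ∀ v ∈ K, D v = (1 / 2 : ℝ) • v)
    (h2 : ∀ v ∈ Kᗮ, D v = (2 : ℝ) • v) :
    LinearMap.det D = (1 / 2) ^ finrank ℝ K * 2 ^ finrank ℝ Kᗮ := by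
  let e := K.prodEquivOfIsCompl _ K.isCompl_orthogonal
  let b := (finBasis ℝ K).prod (finBasis ℝ Kᗮ)
  have h1' : ∀ v : K, D v = ((1 / 2 : ℝ) • v : K) := fun v => h1 v v.2
  have h2' : ∀ v : Kᗮ, D v = ((2 : ℝ) • v : Kᗮ) := fun v => h2 v v.2
  have hm : LinearMap.toMatrix b b (e.symm ∘ₗ D ∘ₗ e.symm.symm) =
      Matrix.fromBlocks ((1 / 2 : ℝ) • 1) 0 0 ((2 : ℝ) • 1) := by
    have a1 : ∀ i, e.symm (D (e (b (Sum.inl i)))) = (1 / 2 : ℝ) • b (Sum.inl i) := by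
      intro i
      rw [LinearEquiv.symm_apply_eq, map_smul]
      have : e (b (Sum.inl i)) = (finBasis ℝ K i : V) := by simp [e, b]
      rw [this, h1']; rfl
    have a2 : ∀ i, e.symm (D (e (b (Sum.inr i)))) = (2 : ℝ) • b (Sum.inr i) := by
      intro i
      rw [LinearEquiv.symm_apply_eq, map_smul]
      have : e (b (Sum.inr i)) = (finBasis ℝ Kᗮ i : V) := by simp [e, b]
      rw [this, h2']; rfl
    ext i j
    rcases j with j | j
    · have : (e.symm ∘ₗ D ∘ₗ e.symm.symm : K × Kᗮ →ₗ[ℝ] K × Kᗮ) (b (Sum.inl j)) = (1 / 2 : ℝ) • b (Sum.inl j) := a1 j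
      rw [LinearMap.toMatrix_apply, this, map_smul, Basis.repr_self]
      rcases i with i | i <;> simp [Finsupp.single_apply, Matrix.one_apply, eq_comm]
    · have : (e.symm ∘ₗ D ∘ₗ e.symm.symm : K × Kᗮ →ₗ[ℝ] K × Kᗮ) (b (Sum.inr j)) = (2 : ℝ) • b (Sum.inr j) := a2 j
      rw [LinearMap.toMatrix_apply, this, map_smul, Basis.repr_self]
      rcases i with i | i <;> simp [Finsupp.single_apply, Matrix.one_apply, eq_comm]
  rw [← LinearMap.det_conj _ e.symm, ← LinearMap.det_toMatrix b, hm, Matrix.det_fromBlocks_zero₂₁,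
    Matrix.det_smul, Matrix.det_smul]
  simp

lemma exists_inj (hinf : ¬ FiniteDimensional ℝ X) (n : ℕ) :
    ∃ ψ : EuclideanSpace ℝ (Fin n) →ₗ[ℝ] X, Function.Injective ψ := by
  let b := Module.Basis.ofVectorSpace ℝ X
  have : Infinite (Module.Basis.ofVectorSpaceIndex ℝ X) := by
    by_contra hc
    rw [not_infinite_iff_finite] at hc
    exact hinf (Module.Finite.of_basis b)
  let v : Fin n → X := fun i => b (Infinite.natEmbedding _ i)
  have hv : LinearIndependent ℝ v := b.linearIndependent.comp _
    ((Infinite.natEmbedding _).injective.comp Fin.val_injective)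
  refine ⟨(Fintype.linearCombination ℝ v) ∘ₗ (WithLp.linearEquiv 2 ℝ (Fin n → ℝ)).toLinearMap, ?_⟩
  exact (LinearIndependent.fintypeLinearCombination_injective hv).comp (LinearEquiv.injective _)

lemma DR (hinf : ¬ FiniteDimensional ℝ X) (N : ℕ) :
    ∃ y : Fin N → X, W2 1 y ∧ ∀ j, 1 / 4 ≤ ‖y j‖ := by
  obtain ⟨ψ, hψ⟩ := exists_inj hinf (2 * N)
  set V := EuclideanSpace ℝ (Fin (2 * N)) with hV
  have hψc : Continuous ψ := ψ.continuous_of_finiteDimensional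
  obtain ⟨c, hc0, hc⟩ := LinearMap.exists_antilipschitzWith ψ (LinearMap.ker_eq_bot.2 hψ)
  have hc' : ∀ v : V, ‖v‖ ≤ c * ‖ψ v‖ := by
    intro v
    have := hc.le_mul_dist v 0
    simpa [dist_eq_norm] using this
  obtain ⟨C, hC0, hC⟩ := (LinearMap.toContinuousLinearMap ψ).bound
  have hC' : ∀ v : V, ‖ψ v‖ ≤ C * ‖v‖ := hC
  let A : Set (V →L[ℝ] V) := {Q | ∀ v, ‖ψ (Q v)‖ ≤ ‖v‖}
  have hAc : IsCompact A := by
    apply Metric.isCompact_of_isClosed_isBounded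
    · have : A = ⋂ v, {Q : V →L[ℝ] V | ‖ψ (Q v)‖ ≤ ‖v‖} := by ext Q; simp [A]
      rw [this]
      refine isClosed_iInter fun v => isClosed_le ?_ continuous_const
      exact (hψc.comp (ContinuousLinearMap.apply ℝ V v).continuous).norm
    · rw [isBounded_iff_forall_norm_le]
      refine ⟨c, fun Q hQ => Q.opNorm_le_bound c.2 fun v => (hc' _).trans ?_⟩
      exact mul_le_mul_of_nonneg_left (hQ v) c.2
  have hId : (C⁻¹ • ContinuousLinearMap.id ℝ V) ∈ A := by
    intro v
    have : ψ ((C⁻¹ • ContinuousLinearMap.id ℝ V) v) = C⁻¹ • ψ v := by simp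
    rw [this, norm_smul, norm_inv, Real.norm_of_nonneg hC0.le, inv_mul_le_iff₀ hC0]
    exact hC' v
  obtain ⟨Q, hQA, hQ⟩ := hAc.exists_isMaxOn ⟨_, hId⟩
    (f := fun Q : V →L[ℝ] V => |Q.det|) (ContinuousLinearMap.continuous_det.abs.continuousOn)
  have hQmax : ∀ R ∈ A, |R.det| ≤ |Q.det| := fun R hR => hQ hR
  have hQpos : 0 < |Q.det| := by
    refine lt_of_lt_of_le ?_ (hQmax _ hId)
    rw [abs_pos]
    have : (C⁻¹ • ContinuousLinearMap.id ℝ V).det = C⁻¹ ^ (Module.finrank ℝ V) * 1 := by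
      rw [← LinearMap.det_id (A := ℝ) (M := V), ← LinearMap.det_smul]; rfl
    rw [this]; positivity
  have step : ∀ j ≤ N, ∃ f : Fin j → V, Orthonormal ℝ f ∧ ∀ i, 1 / 4 ≤ ‖ψ (Q (f i))‖ := by
    intro j
    induction j with
    | zero => intro _; exact ⟨Fin.elim0, ⟨fun i => i.elim0, fun i => i.elim0⟩, fun i => i.elim0⟩
    | succ j ih =>
      intro hj
      obtain ⟨f, hf, hf4⟩ := ih (by omega)
      set K := Submodule.span ℝ (Set.range f) with hK
      have hKr : Module.finrank ℝ K = j := by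
        rw [hK, finrank_span_eq_card hf.linearIndependent, Fintype.card_fin]
      have hKr2 : Module.finrank ℝ Kᗮ = 2 * N - j := by
        have := K.finrank_add_finrank_orthogonal
        have h2 : Module.finrank ℝ V = 2 * N := finrank_euclideanSpace_fin
        omega
      have hex : ∃ v ∈ Kᗮ, ‖v‖ = 1 ∧ 1 / 4 ≤ ‖ψ (Q v)‖ := by
        by_contra hcon
        push Not at hcon
        have hsm : ∀ v ∈ Kᗮ, ‖ψ (Q v)‖ ≤ 1 / 4 * ‖v‖ := by
          intro v hv
          by_cases h0 : v = 0
          · simp [h0]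
          have hvp : 0 < ‖v‖ := norm_pos_iff.2 h0
          have := hcon (‖v‖⁻¹ • v) (Kᗮ.smul_mem _ hv) (by
            rw [norm_smul, norm_inv, norm_norm, inv_mul_cancel₀ hvp.ne'])
          rw [map_smul, map_smul, norm_smul, norm_inv, norm_norm, inv_mul_lt_iff₀ hvp] at this
          linarith
        let D : V →L[ℝ] V := (1 / 2 : ℝ) • K.starProjection + (2 : ℝ) • Kᗮ.starProjection
        have hDA : Q ∘L D ∈ A := by
          intro v
          have e1 : ψ ((Q ∘L D) v) = (1 / 2 : ℝ) • ψ (Q (K.starProjection v))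
              + (2 : ℝ) • ψ (Q (Kᗮ.starProjection v)) := by
            simp [D]
          rw [e1]
          refine (norm_add_le _ _).trans ?_
          rw [norm_smul, norm_smul]
          have n1 : ‖K.starProjection v‖ ≤ ‖v‖ := K.norm_starProjection_apply_le v
          have n2 : ‖Kᗮ.starProjection v‖ ≤ ‖v‖ := Kᗮ.norm_starProjection_apply_le v
          have n3 := hQA (K.starProjection v)
          have n4 := hsm (Kᗮ.starProjection v) (Kᗮ.starProjection_apply_mem v)
          rw [Real.norm_of_nonneg (by norm_num : (0:ℝ) ≤ 1 / 2), Real.norm_of_nonneg (by norm_num : (0:ℝ) ≤ 2)]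
          linarith
        have hdet : (D : V →ₗ[ℝ] V).det = (1 / 2) ^ j * 2 ^ (2 * N - j) := by
          rw [det_D K, hKr, hKr2]
          · intro v hv
            have a : K.starProjection v = v := Submodule.starProjection_eq_self_iff.2 hv
            have b : Kᗮ.starProjection v = 0 := by
              rw [Submodule.starProjection_apply_eq_zero_iff]
              exact K.le_orthogonal_orthogonal hv
            simp [D, a, b]
          · intro v hv
            have a : Kᗮ.starProjection v = v := Submodule.starProjection_eq_self_iff.2 hv
            have b : K.starProjection v = 0 := by
              rw [Submodule.starProjection_apply_eq_zero_iff]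
              exact hv
            simp [D, a, b]
        have hgt : 1 < (D : V →ₗ[ℝ] V).det := by
          rw [hdet]
          have : 2 * N - j = j + (2 * N - 2 * j) := by omega
          rw [this, pow_add, ← mul_assoc, ← mul_pow]
          norm_num
          exact one_lt_pow₀ (by norm_num) (by omega)
        have h1 := hQmax _ hDA
        have h2 : (Q ∘L D).det = Q.det * (D : V →ₗ[ℝ] V).det := by
          exact LinearMap.det_comp (Q : V →ₗ[ℝ] V) (D : V →ₗ[ℝ] V)
        rw [h2, abs_mul, abs_of_pos (lt_trans one_pos hgt)] at h1
        nlinarith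
      obtain ⟨v, hv, hv1, hv4⟩ := hex
      have hvf : ∀ i, inner ℝ (f i) v = 0 := fun i =>
        (K.mem_orthogonal v).1 hv (f i) (Submodule.subset_span ⟨i, rfl⟩)
      refine ⟨Fin.cons v f, ⟨?_, ?_⟩, ?_⟩
      · intro i
        refine Fin.cases ?_ (fun i => ?_) i
        · simpa using hv1
        · simpa using hf.1 i
      · intro a b
        refine Fin.cases ?_ (fun a => ?_) a <;> refine Fin.cases ?_ (fun b => ?_) b
        · intro h; exact absurd rfl h
        · intro _
          simp only [Fin.cons_zero, Fin.cons_succ]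
          rw [real_inner_comm]; exact hvf b
        · intro _
          simp only [Fin.cons_zero, Fin.cons_succ]
          exact hvf a
        · intro h
          simp only [Fin.cons_succ]
          exact hf.2 (fun hab => h (by rw [hab]))
      · intro i
        refine Fin.cases ?_ (fun i => ?_) i
        · simpa using hv4
        · simpa using hf4 i
  obtain ⟨f, hf, hf4⟩ := step N le_rfl
  refine ⟨fun i => ψ (Q (f i)), fun a => ?_, hf4⟩
  have e1 : ∑ j, a j • ψ (Q (f j)) = ψ (Q (∑ j, a j • f j)) := by simp
  have e2 : ‖∑ j, a j • f j‖ ^ 2 = ∑ j, a j ^ 2 := by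
    rw [← real_inner_self_eq_norm_sq, hf.inner_sum]
    exact Finset.sum_congr rfl fun j _ => by simp [sq]
  rw [e1, one_pow, one_mul, ← e2]
  exact pow_le_pow_left₀ (norm_nonneg _) (hQA _) 2

end
end RA

namespace RA
section
variable {X : Type*} [NormedAddCommGroup X] [NormedSpace ℝ X]
variable {ι κ : Type*} [Fintype ι] [DecidableEq ι] [Fintype κ] [DecidableEq κ]

noncomputable def rep (m : ℕ) (y : κ → X) : Fin m × κ → X := fun z => (√m)⁻¹ • y z.2

noncomputable def S {m : ℕ} (ω : Fin m → Bool) : ℝ := ∑ i, sg (ω i)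

lemma W2_rep {m : ℕ} (hm : 1 ≤ m) {σ : ℝ} {y : κ → X} (h : W2 σ y) : W2 σ (rep m y) := by
  intro a
  have hm0 : (0 : ℝ) < m := by exact_mod_cast hm
  have e1 : ∑ z, a z • rep m y z = ∑ j, ((√m)⁻¹ * ∑ i, a (i, j)) • y j := by
    rw [Fintype.sum_prod_type_right]
    refine Finset.sum_congr rfl fun j _ => ?_
    simp only [rep, smul_smul]
    rw [← Finset.sum_smul, ← Finset.sum_mul, mul_comm]
  rw [e1, Fintype.sum_prod_type_right]
  refine (h _).trans (mul_le_mul_of_nonneg_left (Finset.sum_le_sum fun j _ => ?_) (sq_nonneg σ))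
  have := sq_sum_le_card_mul_sum_sq (s := Finset.univ) (f := fun i : Fin m => a (i, j))
  rw [mul_pow, inv_pow, Real.sq_sqrt hm0.le, inv_mul_le_iff₀ hm0]
  simpa using this

lemma F_rep_step {n m : ℕ} {σ : ℝ} (hσ : 0 ≤ σ) {y : κ → X} (hm : 1 ≤ m) (h : W2 σ y) :
    F (rep (n * m) y) ≤ betaN X n / √n * (F (rep m y) + n * (2 * σ)) := by
  let e : Fin n × (Fin m × κ) ≃ Fin (n * m) × κ :=
    (Equiv.prodAssoc _ _ _).symm.trans (finProdFinEquiv.prodCongr (Equiv.refl κ))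
  have e1 : rep (n * m) y ∘ e = fun z => (√n)⁻¹ • (fun z : Fin n × (Fin m × κ) => rep m y z.2) z := by
    funext z
    simp [rep, e, smul_smul, mul_comm]
  rw [← F_equiv e, e1, F_smul, abs_of_nonneg (by positivity), div_eq_inv_mul, mul_assoc]
  apply mul_le_mul_of_nonneg_left _ (by positivity)
  exact key (by simp) (fun (_ : Fin n) => rep m y) (F_nonneg _) hσ (fun _ => le_rfl)
    (fun _ => W2_rep hm h)

lemma F_rep_eq (m : ℕ) (y : κ → X) :
    F (rep m y) = 𝔼 η : κ → Fin m → Bool, F (fun j => ((√m)⁻¹ * S (η j)) • y j) := by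
  rw [← F_equiv (Equiv.prodComm κ (Fin m))]
  have := F_prod (fun (j : κ) (_ : Fin m) => (√m)⁻¹ • y j)
  refine Eq.trans this ?_
  refine Finset.expect_congr rfl fun η _ => ?_
  congr 1; funext j
  rw [T, ← Finset.sum_smul, smul_smul, mul_comm]; rfl

lemma F_expect_le {Ω : Type*} [Fintype Ω] (s : Ω → κ → ℝ) (y : κ → X) :
    F (fun j => (𝔼 ω, s ω j) • y j) ≤ 𝔼 ω, F (fun j => s ω j • y j) := by
  have e : (fun j => (𝔼 ω, s ω j) • y j) =
      fun j => ((Fintype.card Ω : ℝ)⁻¹) • (fun j => ∑ ω, s ω j • y j) j := by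
    funext j
    rw [Fintype.expect_eq_sum_div_card, div_eq_inv_mul, mul_smul, Finset.sum_smul]
  rw [e, F_smul, abs_of_nonneg (by positivity), Fintype.expect_eq_sum_div_card, div_eq_inv_mul]
  exact mul_le_mul_of_nonneg_left (F_sum_le _ _) (by positivity)

lemma moments (m : ℕ) : 𝔼 ω : Fin m → Bool, S ω ^ 2 = m ∧ 𝔼 ω : Fin m → Bool, S ω ^ 4 ≤ 3 * m ^ 2 := by
  induction m with
  | zero => simp [S]
  | succ m ih =>
    obtain ⟨h2, h4⟩ := ih
    have hs : ∀ (b : Bool) (ω : Fin m → Bool), S (Fin.cons b ω : Fin (m+1) → Bool) = sg b + S ω := by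
      intro b ω
      simp [S, Fin.sum_univ_succ]
    constructor
    · rw [expect_cons]
      have : ∀ ω : Fin m → Bool, (S (Fin.cons true ω : Fin (m+1) → Bool) ^ 2 +
          S (Fin.cons false ω : Fin (m+1) → Bool) ^ 2) / 2 = S ω ^ 2 + 1 := by
        intro ω; rw [hs, hs]; simp only [sg]; norm_num; ring
      simp only [this]
      rw [Finset.expect_add_distrib, h2, Fintype.expect_const]
      push_cast; ring
    · rw [expect_cons]
      have : ∀ ω : Fin m → Bool, (S (Fin.cons true ω : Fin (m+1) → Bool) ^ 4 +
          S (Fin.cons false ω : Fin (m+1) → Bool) ^ 4) / 2 = S ω ^ 4 + 6 * S ω ^ 2 + 1 := by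
        intro ω; rw [hs, hs]; simp only [sg]; norm_num; ring
      simp only [this]
      rw [Finset.expect_add_distrib, Finset.expect_add_distrib, ← Finset.mul_expect, h2,
        Fintype.expect_const]
      push_cast; nlinarith

lemma khinchine {m : ℕ} (hm : 1 ≤ m) : 3 / 8 ≤ 𝔼 ω : Fin m → Bool, |(√m)⁻¹ * S ω| := by
  have hm0 : (0 : ℝ) < m := by exact_mod_cast hm
  obtain ⟨h2, h4⟩ := moments m
  have hp : ∀ u : ℝ, 0 ≤ u → 3 / 4 * u ^ 2 - 1 / 8 * u ^ 4 ≤ u := by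
    intro u hu
    have h : 0 ≤ u ^ 3 - 6 * u + 8 := by nlinarith [sq_nonneg (u - 3 / 2), mul_nonneg hu (sq_nonneg (u - 3 / 2))]
    nlinarith
  have hq : ∀ ω : Fin m → Bool, 3 / 4 * ((m : ℝ)⁻¹ * S ω ^ 2) - 1 / 8 * (((m : ℝ)⁻¹) ^ 2 * S ω ^ 4)
      ≤ |(√m)⁻¹ * S ω| := by
    intro ω
    have := hp |(√m)⁻¹ * S ω| (abs_nonneg _)
    have e4 : |(√m)⁻¹ * S ω| ^ 4 = (((√m)⁻¹ * S ω) ^ 2) ^ 2 := by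
      rw [← sq_abs ((√m)⁻¹ * S ω)]; ring
    have e2 : ((√m)⁻¹ * S ω) ^ 2 = (m : ℝ)⁻¹ * S ω ^ 2 := by
      rw [mul_pow, inv_pow, Real.sq_sqrt hm0.le]
    rw [e4, sq_abs, e2] at this
    refine le_trans (le_of_eq ?_) this
    ring
  refine le_trans ?_ (Finset.expect_le_expect fun ω _ => hq ω)
  rw [Finset.expect_sub_distrib, ← Finset.mul_expect, ← Finset.mul_expect, ← Finset.mul_expect,
    ← Finset.mul_expect, h2, inv_mul_cancel₀ hm0.ne']
  have : ((m : ℝ)⁻¹) ^ 2 * (𝔼 ω : Fin m → Bool, S ω ^ 4) ≤ 3 := by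
    rw [inv_pow, inv_mul_le_iff₀ (by positivity)]; linarith
  linarith

lemma F_rep_lower {m : ℕ} (hm : 1 ≤ m) (y : κ → X) : 3 / 8 * F y ≤ F (rep m y) := by
  rw [F_rep_eq]
  have h1 : ∀ η : κ → Fin m → Bool, F (fun j => ((√m)⁻¹ * S (η j)) • y j) =
      F (fun j => |(√m)⁻¹ * S (η j)| • y j) := fun η => F_abs _ _
  simp only [h1]
  refine le_trans ?_ (F_expect_le (fun (η : κ → Fin m → Bool) j => |(√m)⁻¹ * S (η j)|) y)
  have : ∀ j : κ, 𝔼 η : κ → Fin m → Bool, |(√m)⁻¹ * S (η j)| = 𝔼 ω : Fin m → Bool, |(√m)⁻¹ * S ω| :=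
    fun j => expect_eval j (fun ω : Fin m → Bool => |(√m)⁻¹ * S ω|)
  simp only [this]
  rw [F_smul]
  exact mul_le_mul_of_nonneg_right ((khinchine hm).trans (le_abs_self _)) (F_nonneg y)

lemma F_ge_single (x : κ → X) (j : κ) : ‖x j‖ ≤ F x := by
  have h1 : F x = 𝔼 ε, ‖T x (flip ε j)‖ := by
    refine Fintype.expect_bijective (fun ε => flip ε j)
      (Function.Involutive.bijective fun ε => flip_flip ε j) _ _ fun ε => ?_
    rw [flip_flip]
  have h2 : 2 * ‖x j‖ ≤ F x + F x := by
    nth_rewrite 2 [h1]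
    rw [F, ← Finset.expect_add_distrib]
    refine Finset.le_expect Finset.univ_nonempty fun ε _ => ?_
    have := norm_sub_le (T x ε) (T x (flip ε j))
    rw [show T x ε - T x (flip ε j) = (2 * sg (ε j)) • x j by rw [T_flip]; abel, norm_smul,
      Real.norm_eq_abs, abs_mul, sg_abs] at this
    simpa using this
  linarith

lemma rep_lower {N k : ℕ} (hk : 1 ≤ k) (y : Fin N → X) (hy : ∀ j, 1 / 4 ≤ ‖y j‖) :
    √k / 4 * (1 - (1 - ((2 : ℝ) ^ k)⁻¹) ^ N) ≤ F (rep k y) := by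
  classical
  have hk0 : (0 : ℝ) < k := by exact_mod_cast hk
  rw [F_rep_eq]
  let g : (Fin k → Bool) → ℝ := fun ω => 1 - if ω = (fun _ => true) then 1 else 0
  have hg : 𝔼 ω, g ω = 1 - ((2 : ℝ) ^ k)⁻¹ := by
    simp only [g]
    rw [Finset.expect_sub_distrib, Fintype.expect_const, Fintype.expect_eq_sum_div_card]
    simp
  have hp : (1 - ((2 : ℝ) ^ k)⁻¹) ^ N = 𝔼 η : Fin N → Fin k → Bool, ∏ j, g (η j) := by
    rw [← hg, Finset.expect_pow]
    simp
  have h1 : (1 : ℝ) = 𝔼 η : Fin N → Fin k → Bool, (1 : ℝ) := (Fintype.expect_const _).symm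
  rw [hp]
  nth_rewrite 1 [h1]
  rw [← Finset.expect_sub_distrib, Finset.mul_expect]
  refine Finset.expect_le_expect fun η _ => ?_
  by_cases h : ∃ j, η j = fun _ => true
  · obtain ⟨j, hj⟩ := h
    rw [Finset.prod_eq_zero (Finset.mem_univ j) (by simp [g, hj]), sub_zero, mul_one]
    refine le_trans ?_ (F_ge_single _ j)
    rw [norm_smul, hj]
    have : (√k)⁻¹ * S (fun _ : Fin k => true) = √k := by
      simp only [S, sg]
      simp
      rw [inv_mul_eq_div, Real.div_sqrt]
    rw [this, Real.norm_of_nonneg (Real.sqrt_nonneg _)]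
    have := mul_le_mul_of_nonneg_left (hy j) (Real.sqrt_nonneg k)
    linarith
  · push Not at h
    rw [Finset.prod_eq_one (fun j _ => by simp [g, h j]), sub_self, mul_zero]
    exact F_nonneg _

lemma two_case (hinf : ¬ FiniteDimensional ℝ X) {n : ℕ} (hn : 1 ≤ n) : √n ≤ betaN X n := by
  by_contra hcon
  push Not at hcon
  have hn0 : (0 : ℝ) < n := by exact_mod_cast hn
  set c := betaN X n / √n with hc
  have hc0 : 0 ≤ c := div_nonneg (beta_nonneg n) (Real.sqrt_nonneg _)
  have hc1 : c < 1 := (div_lt_one (by positivity)).2 hcon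
  set C := 2 * n * c / (1 - c) with hC
  have hC0 : 0 ≤ C := div_nonneg (by positivity) (by linarith)
  have hCe : c * (C + 2 * n) = C := by
    have : 1 - c ≠ 0 := by linarith
    rw [hC]; field_simp; ring
  have bound : ∀ (k N : ℕ) (z : Fin k × Fin N → X), W2 1 z → 3 / 8 * F z ≤ C := by
    intro k N z hz
    have hit : ∀ l : ℕ, F (rep (n ^ l) z) ≤ c ^ l * F (rep 1 z) + C := by
      intro l
      induction l with
      | zero => rw [pow_zero, pow_zero, one_mul]; linarith
      | succ l ih =>
        rw [pow_succ' n l]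
        refine (F_rep_step zero_le_one (Nat.one_le_pow _ _ hn) hz).trans ?_
        rw [← hc]
        calc c * (F (rep (n ^ l) z) + n * (2 * 1)) ≤ c * (c ^ l * F (rep 1 z) + C + n * (2 * 1)) := by
              gcongr
          _ = c ^ (l + 1) * F (rep 1 z) + c * (C + 2 * n) := by ring
          _ = _ := by rw [hCe]
    have hlim : Filter.Tendsto (fun l : ℕ => c ^ l * F (rep 1 z) + C) Filter.atTop (nhds (0 * F (rep 1 z) + C)) :=
      ((tendsto_pow_atTop_nhds_zero_of_lt_one hc0 hc1).mul_const _).add_const _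
    rw [zero_mul, zero_add] at hlim
    exact ge_of_tendsto' hlim fun l => (F_rep_lower (Nat.one_le_pow _ _ hn) z).trans (hit l)
  have bound2 : ∀ k : ℕ, 1 ≤ k → 3 / 8 * (√k / 4) ≤ C := by
    intro k hk
    have h2 : (1 : ℝ) < 2 ^ k := one_lt_pow₀ (by norm_num) (by omega)
    have hr0 : 0 ≤ 1 - ((2 : ℝ) ^ k)⁻¹ := by
      have := inv_le_one_of_one_le₀ h2.le
      linarith
    have hr1 : 1 - ((2 : ℝ) ^ k)⁻¹ < 1 := by
      have : 0 < ((2 : ℝ) ^ k)⁻¹ := by positivity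
      linarith
    have hN : ∀ N : ℕ, 3 / 8 * (√k / 4 * (1 - (1 - ((2 : ℝ) ^ k)⁻¹) ^ N)) ≤ C := by
      intro N
      obtain ⟨y, hy1, hy2⟩ := DR hinf N
      have := bound k N (rep k y) (W2_rep hk hy1)
      have h3 := rep_lower hk y hy2
      linarith
    have hlim : Filter.Tendsto (fun N : ℕ => 3 / 8 * (√k / 4 * (1 - (1 - ((2 : ℝ) ^ k)⁻¹) ^ N)))
        Filter.atTop (nhds (3 / 8 * (√k / 4 * (1 - 0)))) :=
      (((tendsto_pow_atTop_nhds_zero_of_lt_one hr0 hr1).const_sub 1).const_mul _).const_mul _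
    have := le_of_tendsto' hlim hN
    simpa using this
  obtain ⟨k, hk⟩ := exists_nat_gt ((32 / 3 * C) ^ 2)
  have h1 := bound2 (k + 1) (by omega)
  have h2 : 32 / 3 * C < √((k + 1 : ℕ) : ℝ) := by
    apply Real.lt_sqrt_of_sq_lt
    push_cast; linarith
  linarith

lemma sub_case {p : ℝ} (hp1 : 1 ≤ p) (hp2 : p < 2) (hne : ∃ v : X, v ≠ 0)
    (hmax : ∀ q : ℝ, p < q → q ≤ 2 → ¬ ∃ K' : ℝ, HasTypeWith X q K')
    {n : ℕ} (hn : 1 ≤ n) : (n : ℝ) ^ (1 / p) ≤ betaN X n := by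
  rcases hn.eq_or_lt with rfl | hn
  · obtain ⟨v, hv⟩ := hne
    have h1 := F_ge_single (fun _ : Fin 1 => ‖v‖⁻¹ • v) 0
    have h2 : ‖‖v‖⁻¹ • v‖ = 1 := by
      rw [norm_smul, norm_inv, norm_norm, inv_mul_cancel₀ (norm_ne_zero_iff.2 hv)]
    have h3 := F_le_beta_fin 1 (fun _ : Fin 1 => ‖v‖⁻¹ • v) (fun _ => h2.le)
    rw [h2] at h1
    simp only [Nat.cast_one, Real.one_rpow]
    linarith
  · by_contra hcon
    push Not at hcon
    have hn0 : (0 : ℝ) < n := by positivity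
    have hcont : Filter.Tendsto (fun t : ℝ => (n : ℝ) ^ t) (nhdsWithin (1 / p) (Set.Iio (1 / p)))
        (nhds ((n : ℝ) ^ (1 / p))) :=
      ((Real.continuous_const_rpow hn0.ne').tendsto _).mono_left nhdsWithin_le_nhds
    have e1 := hcont.eventually (lt_mem_nhds hcon)
    have hlt : (1 / 2 : ℝ) < 1 / p := one_div_lt_one_div_of_lt (by linarith) hp2
    have e2 : ∀ᶠ t in nhdsWithin (1 / p) (Set.Iio (1 / p)), t ∈ Set.Ioo (1 / 2) (1 / p) :=
      Ioo_mem_nhdsLT hlt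
    obtain ⟨t, ht1, ht2, ht3⟩ := (e1.and e2).exists
    obtain ⟨D, hD, hβ⟩ := growth (by omega) ht2.le ht1
    have ht0 : 0 < t := by linarith
    have hps : p < 1 / t := by
      rw [lt_one_div (by linarith) ht0]; exact ht3
    have hs2 : 1 / t < 2 := by
      rw [div_lt_iff₀ ht0]; linarith
    obtain ⟨q, hq1, hq2⟩ := exists_between hps
    refine hmax q hq1 (by linarith) (type_of_growth hD (by linarith) ht0.le ?_ hβ)
    rwa [lt_div_iff₀ ht0] at hq2

end
end RA
/-- **Lemma 2.7 of the paper.** If `X` is an infinite-dimensional Banach space of type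
`p ∈ [1,2]` with constant `K`, and `X` has no type `q` for `p < q ≤ 2` (i.e. `p_X = p`),
then `n^{1/p} ≤ β_n(X) ≤ K n^{1/p}` for every `n ≥ 1`. -/
theorem betaN_bounds_of_type {𝕜 X : Type*} [RCLike 𝕜]
    [NormedAddCommGroup X] [NormedSpace 𝕜 X] [CompleteSpace X]
    (hinf : ¬ FiniteDimensional 𝕜 X)
    (p K : ℝ) (hp : p ∈ Set.Icc (1 : ℝ) 2)
    (htype : HasTypeWith X p K)
    (hmax : ∀ q : ℝ, p < q → q ≤ 2 → ¬ ∃ K' : ℝ, HasTypeWith X q K')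
    (n : ℕ) (hn : 1 ≤ n) :
    (n : ℝ) ^ (1 / p) ≤ betaN X n ∧ betaN X n ≤ K * (n : ℝ) ^ (1 / p) := by
  letI : NormedSpace ℝ X := NormedSpace.restrictScalars ℝ 𝕜 X
  haveI : IsScalarTower ℝ 𝕜 X := RestrictScalars.isScalarTower ℝ 𝕜 X
  have hinf' : ¬ FiniteDimensional ℝ X := fun h => hinf (Module.Finite.of_restrictScalars_finite ℝ 𝕜 X)
  have hne : ∃ v : X, v ≠ 0 := by
    by_contra hc
    push Not at hc
    haveI : Subsingleton X := ⟨fun a b => by rw [hc a, hc b]⟩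
    exact hinf inferInstance
  have hp0 : 0 < p := by linarith [hp.1]
  refine ⟨?_, ?_⟩
  · rcases hp.2.eq_or_lt with rfl | h2
    · rw [← Real.sqrt_eq_rpow]
      exact RA.two_case hinf' hn
    · exact RA.sub_case hp.1 h2 hne hmax hn
  · have hK : 0 ≤ K := by
      obtain ⟨v, hv⟩ := hne
      have h1 := htype 1 (fun _ => v)
      rw [RA.rad_eq] at h1
      have h2 := RA.F_nonneg (fun _ : Fin 1 => v)
      have h3 : 0 < (∑ i : Fin 1, ‖v‖ ^ p) ^ (1 / p) := by
        have : 0 < ‖v‖ := norm_pos_iff.2 hv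
        simp only [Finset.univ_unique, Finset.sum_const, Finset.card_singleton, one_smul]
        positivity
      exact nonneg_of_mul_nonneg_left (h2.trans h1) h3
    refine RA.beta_le fun x hx => ?_
    rw [← RA.rad_eq]
    refine (htype n x).trans (mul_le_mul_of_nonneg_left ?_ hK)
    refine Real.rpow_le_rpow (Finset.sum_nonneg fun i _ => by positivity) ?_ (by positivity)
    calc ∑ i, ‖x i‖ ^ p ≤ ∑ i : Fin n, (1 : ℝ) :=
          Finset.sum_le_sum fun i _ => Real.rpow_le_one (norm_nonneg _) (hx i) hp0.le
      _ = n := by simp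
end

section
/- Let X be an infinite-dimensional Banach space (over ℝ or ℂ) and p ∈ [1,2]. Suppose that for every q with p < q ≤ 2, X does not have type q. Then for every n ≥ 1 and every δ > 0 there exist vectors x₁, …, xₙ in the closed unit ball of X with 𝔼‖Σ_{i=1}^n ε_i x_i‖ ≥ n^{1/p}/(1+δ); consequently β_n(X) ≥ n^{1/p} for every n ≥ 1. -/
namespace RadLB

/-- Average of `F` over signed sums of a list. -/
noncomputable def A {X : Type*} [AddCommGroup X] : List X → (X → ℝ) → ℝ
  | [], F => F 0
  | x :: l, F => (A l (fun y => F (x + y)) + A l (fun y => F (-x + y))) / 2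

section basic
variable {X : Type*} [AddCommGroup X]

lemma A_nil (F : X → ℝ) : A [] F = F 0 := rfl
lemma A_cons (x : X) (l : List X) (F : X → ℝ) :
    A (x :: l) F = (A l (fun y => F (x + y)) + A l (fun y => F (-x + y))) / 2 := rfl

lemma A_add (l : List X) (F G : X → ℝ) : A l (fun y => F y + G y) = A l F + A l G := by
  induction l generalizing F G with
  | nil => rfl
  | cons x l ih => simp only [A_cons, ih]; ring

lemma A_mul (l : List X) (c : ℝ) (F : X → ℝ) : A l (fun y => c * F y) = c * A l F := by
  induction l generalizing F with
  | nil => rfl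
  | cons x l ih => simp only [A_cons, ih]; ring

lemma A_const (l : List X) (c : ℝ) : A l (fun _ => c) = c := by
  induction l with
  | nil => rfl
  | cons x l ih => simp only [A_cons, ih]; ring

lemma A_mono (l : List X) {F G : X → ℝ} (h : ∀ y, F y ≤ G y) : A l F ≤ A l G := by
  induction l generalizing F G with
  | nil => exact h 0
  | cons x l ih =>
    have h1 := ih (F := fun y => F (x + y)) (G := fun y => G (x + y)) (fun y => h _)
    have h2 := ih (F := fun y => F (-x + y)) (G := fun y => G (-x + y)) (fun y => h _)
    simp only [A_cons]; linarith

lemma A_neg (l : List X) (F : X → ℝ) : A l (fun y => F (-y)) = A l F := by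
  induction l generalizing F with
  | nil => simp [A_nil]
  | cons x l ih =>
    have h1 := ih (fun y => F (-x + y))
    have h2 := ih (fun y => F (x + y))
    simp only [A_cons, neg_add, neg_neg]
    rw [h1, h2]; ring

lemma A_append (l m : List X) (F : X → ℝ) :
    A (l ++ m) F = A l (fun y => A m (fun z => F (y + z))) := by
  induction l generalizing F with
  | nil => simp [A_nil]
  | cons x l ih => simp only [List.cons_append, A_cons, ih, add_assoc]

lemma A_perm {l m : List X} (h : l.Perm m) (F : X → ℝ) : A l F = A m F := by
  induction h generalizing F with
  | nil => rfl
  | cons x _ ih => simp only [A_cons, ih]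
  | swap x y l =>
    simp only [A_cons]
    have e : ∀ a b : X, A l (fun z => F (a + (b + z))) = A l (fun z => F (b + (a + z))) := by
      intro a b; congr 1; ext z; rw [add_left_comm]
    rw [e y x, e y (-x), e (-y) x, e (-y) (-x)]; ring
  | trans _ _ h1 h2 => rw [h1, h2]

lemma A_zeros (l : List X) (k : ℕ) (F : X → ℝ) : A (List.replicate k 0 ++ l) F = A l F := by
  induction k with
  | zero => simp
  | succ k ih =>
    rw [List.replicate_succ, List.cons_append, A_cons]
    simp only [neg_zero, zero_add]
    rw [ih]; ring

lemma A_map {Y : Type*} [AddCommGroup Y] (u : X →+ Y) (l : List X) (F : Y → ℝ) :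
    A (l.map u) F = A l (fun y => F (u y)) := by
  induction l generalizing F with
  | nil => simp [A_nil]
  | cons x l ih => simp only [List.map_cons, A_cons, ih, map_add, map_neg]

lemma A_ofFn (n : ℕ) (x : Fin n → X) (F : X → ℝ) :
    ((2 : ℝ) ^ n)⁻¹ * ∑ ε : Fin n → Bool, F (∑ i, (if ε i then x i else -x i))
      = A (List.ofFn x) F := by
  induction n generalizing F with
  | zero => simp [A_nil]
  | succ n ih =>
    rw [List.ofFn_succ, A_cons, ← ih, ← ih,
      ← (Fin.consEquiv (fun _ : Fin (n+1) => Bool)).sum_comp, Fintype.sum_prod_type]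
    simp [Fin.sum_univ_succ, Fin.consEquiv]
    field_simp
    ring

/-- Joint average over a list of blocks. -/
noncomputable def B : List (List X) → (List X → ℝ) → ℝ
  | [], G => G []
  | L :: Ls, G => A L (fun y => B Ls (fun ys => G (y :: ys)))

lemma B_nil (G : List X → ℝ) : B [] G = G [] := rfl
lemma B_cons (L : List X) (Ls : List (List X)) (G : List X → ℝ) :
    B (L :: Ls) G = A L (fun y => B Ls (fun ys => G (y :: ys))) := rfl

lemma B_add (Ls : List (List X)) (F G : List X → ℝ) :
    B Ls (fun y => F y + G y) = B Ls F + B Ls G := by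
  induction Ls generalizing F G with
  | nil => rfl
  | cons x l ih => simp only [B_cons, ih, A_add]

lemma B_mul (Ls : List (List X)) (c : ℝ) (F : List X → ℝ) :
    B Ls (fun y => c * F y) = c * B Ls F := by
  induction Ls generalizing F with
  | nil => rfl
  | cons x l ih => simp only [B_cons, ih, A_mul]

lemma B_const (Ls : List (List X)) (c : ℝ) : B Ls (fun _ => c) = c := by
  induction Ls with
  | nil => rfl
  | cons x l ih => simp only [B_cons, ih, A_const]

lemma B_mono (Ls : List (List X)) {F G : List X → ℝ}
    (h : ∀ y, y.length = Ls.length → F y ≤ G y) : B Ls F ≤ B Ls G := by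
  induction Ls generalizing F G with
  | nil => exact h [] rfl
  | cons x l ih => exact A_mono _ fun y => ih fun ys hys => h _ (by simp [hys])

lemma A_flatten (Ls : List (List X)) (F : X → ℝ) :
    A Ls.flatten F = B Ls (fun ys => F ys.sum) := by
  induction Ls generalizing F with
  | nil => simp [A_nil, B_nil]
  | cons L Ls ih => simp only [List.flatten_cons, A_append, ih, B_cons, List.sum_cons]

lemma B_symm (Ls : List (List X)) (F : X → ℝ) :
    B Ls (fun ys => A ys F) = B Ls (fun ys => F ys.sum) := by
  induction Ls generalizing F with
  | nil => simp [A_nil, B_nil]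
  | cons L Ls ih =>
    simp only [B_cons, A_cons, List.sum_cons]
    have h : ∀ y : X, B Ls (fun ys => (A ys (fun z => F (y + z)) + A ys (fun z => F (-y + z))) / 2)
        = (1/2) * B Ls (fun ys => F (y + ys.sum)) + (1/2) * B Ls (fun ys => F (-y + ys.sum)) := by
      intro y
      rw [← ih (fun z => F (y + z)), ← ih (fun z => F (-y + z)), ← B_mul, ← B_mul, ← B_add]
      congr 1; ext ys; ring
    simp only [h]
    rw [A_add, A_mul, A_mul, A_neg L (fun y => B Ls (fun ys => F (y + ys.sum)))]
    ring

lemma B_sum (Ls : List (List X)) (φ : X → ℝ) :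
    B Ls (fun ys => (ys.map φ).sum) = (Ls.map (fun L => A L φ)).sum := by
  induction Ls with
  | nil => simp [B_nil]
  | cons L Ls ih =>
    simp only [B_cons, List.map_cons, List.sum_cons, B_add, B_const, A_add, A_const, ih]

end basic

section normed
variable {X : Type*} [NormedAddCommGroup X]

lemma rad_eq (n : ℕ) (x : Fin n → X) : rademacherAvg n x = A (List.ofFn x) (fun y => ‖y‖) :=
  A_ofFn n x _

lemma A_lip (l : List X) (a b : X) :
    A l (fun y => ‖a + y‖) ≤ A l (fun y => ‖b + y‖) + ‖a - b‖ := by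
  rw [← A_const l ‖a - b‖, ← A_add]
  apply A_mono
  intro y
  have := norm_add_le (b + y) (a - b)
  rwa [show b + y + (a - b) = a + y by abel] at this

lemma A_var (l : List X) (hl : ∀ x ∈ l, ‖x‖ ≤ 1) (a : X) :
    A l (fun y => ‖a + y‖ ^ 2) ≤ (A l (fun y => ‖a + y‖)) ^ 2 + l.length := by
  induction l generalizing a with
  | nil => simp [A_nil]
  | cons x l ih =>
    have hx : ‖x‖ ≤ 1 := hl x (by simp)
    have ih' := ih (fun y hy => hl y (by simp [hy]))
    have h1 := ih' (a + x)
    have h2 := ih' (a + -x)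
    have l1 := A_lip l (a + x) (a + -x)
    have l2 := A_lip l (a + -x) (a + x)
    have e1 : ‖a + x - (a + -x)‖ ≤ 2 := by
      rw [show a + x - (a + -x) = x + x by abel]
      linarith [norm_add_le x x]
    have e2 : ‖a + -x - (a + x)‖ ≤ 2 := by
      rw [show a + -x - (a + x) = -x + -x by abel]
      have := norm_add_le (-x) (-x)
      rw [norm_neg] at this
      linarith
    simp only [A_cons, ← add_assoc, List.length_cons, Nat.cast_add, Nat.cast_one]
    set P := A l (fun y => ‖a + x + y‖)
    set Q := A l (fun y => ‖a + -x + y‖)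
    have h3 : (P - Q) ^ 2 ≤ 2 ^ 2 := sq_le_sq' (by linarith) (by linarith)
    nlinarith

/-- uniform bound for lists of length `n`. -/
def Bd (X : Type*) [NormedAddCommGroup X] (n : ℕ) (b : ℝ) : Prop :=
  ∀ l : List X, l.length = n → (∀ x ∈ l, ‖x‖ ≤ 1) → A l (fun y => ‖y‖) ≤ b

lemma A_excess (l : List X) (hl : ∀ x ∈ l, ‖x‖ ≤ 1) (c : ℝ) (hc : A l (fun y => ‖y‖) ≤ c)
    (hm : 0 < l.length) : A l (fun y => max (‖y‖ - c) 0) ≤ √(l.length) := by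
  have hv := A_var l hl 0
  simp only [zero_add] at hv
  set μ := A l (fun y => ‖y‖) with hμ
  set s := √(l.length : ℝ) with hs
  have hs0 : 0 < s := Real.sqrt_pos.2 (by exact_mod_cast hm)
  have hss : s ^ 2 = l.length := Real.sq_sqrt (by positivity)
  have h : ∀ y : X, max (‖y‖ - c) 0 ≤
      (1 / (2 * s)) * ‖y‖ ^ 2 + ((-(μ / s)) * ‖y‖ + (μ ^ 2 / (2 * s) + s / 2)) := by
    intro y
    have key : (1 / (2 * s)) * ‖y‖ ^ 2 + ((-(μ / s)) * ‖y‖ + (μ ^ 2 / (2 * s) + s / 2))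
        = ((‖y‖ - μ) ^ 2 + s ^ 2) / (2 * s) := by field_simp; ring
    rw [key, le_div_iff₀ (by positivity)]
    rcases max_cases (‖y‖ - c) 0 with ⟨h1, _⟩ | ⟨h1, _⟩
    · rw [h1]; nlinarith [sq_nonneg (‖y‖ - μ - s)]
    · rw [h1]; nlinarith [sq_nonneg (‖y‖ - μ)]
  refine (A_mono l h).trans ?_
  rw [A_add, A_add, A_mul, A_mul, A_const, ← hμ]
  have : (1 / (2 * s)) * A l (fun y => ‖y‖ ^ 2) ≤ (1 / (2 * s)) * (μ ^ 2 + s ^ 2) := by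
    rw [hss]; gcongr
  refine (add_le_add_left this _).trans (le_of_eq ?_)
  field_simp; ring

lemma A_hom [NormedSpace ℝ X] (l : List X) (s : ℝ) (hs : 0 ≤ s) :
    A (l.map (fun x => s • x)) (fun y => ‖y‖) = s * A l (fun y => ‖y‖) := by
  have := A_map (DistribSMul.toAddMonoidHom X s) l (fun y => ‖y‖)
  simp only [DistribSMul.toAddMonoidHom_apply, norm_smul, Real.norm_eq_abs, abs_of_nonneg hs,
    A_mul] at this
  exact this

lemma Bd.scale [NormedSpace ℝ X] {n : ℕ} {b : ℝ} (h : Bd X n b) (l : List X) (hl : l.length = n)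
    (M : ℝ) (hM : 0 < M) (hlM : ∀ x ∈ l, ‖x‖ ≤ M) : A l (fun y => ‖y‖) ≤ b * M := by
  have := h (l.map (fun x => M⁻¹ • x)) (by simpa using hl) (by
    intro x hx
    obtain ⟨y, hy, rfl⟩ := List.mem_map.1 hx
    rw [norm_smul, Real.norm_eq_abs, abs_of_pos (by positivity), inv_mul_le_iff₀ hM, mul_one]
    exact hlM y hy)
  rw [A_hom _ _ (by positivity), inv_mul_le_iff₀ hM] at this
  linarith

lemma Bd.mono {n m : ℕ} {b : ℝ} (h : Bd X n b) (hmn : m ≤ n) : Bd X m b := by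
  intro l hl hx
  rw [← A_zeros l (n - m)]
  apply h
  · simp; omega
  · intro x hx'
    rw [List.mem_append, List.mem_replicate] at hx'
    rcases hx' with ⟨_, rfl⟩ | h'
    · simp
    · exact hx x h'

lemma exists_blocks {X : Type*} (n m : ℕ) (l : List X) (hl : l.length = n * m) :
    ∃ Ls : List (List X), Ls.flatten = l ∧ Ls.length = n ∧ ∀ L ∈ Ls, L.length = m := by
  induction n generalizing l with
  | zero =>
    refine ⟨[], ?_, rfl, by simp⟩
    simp at hl; simp [hl]
  | succ n ih =>
    obtain ⟨Ls, h1, h2, h3⟩ := ih (l.drop m) (by simp [hl, Nat.succ_mul])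
    refine ⟨l.take m :: Ls, by simp [h1], by simp [h2], ?_⟩
    intro L hL
    rcases List.mem_cons.1 hL with rfl | h
    · simp [hl, Nat.succ_mul]
    · exact h3 L h

lemma Bd.mul [NormedSpace ℝ X] {n m : ℕ} {b c : ℝ} (hm : 0 < m) (hb : 0 ≤ b) (hc0 : 0 < c)
    (h : Bd X n b) (hc : Bd X m c) : Bd X (n * m) (b * (c + n * √m)) := by
  intro l hl hx
  obtain ⟨Ls, rfl, h2, h3⟩ := exists_blocks n m l hl
  have hx' : ∀ L ∈ Ls, ∀ x ∈ L, ‖x‖ ≤ 1 := fun L hL x hxL =>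
    hx x (List.mem_flatten.2 ⟨L, hL, hxL⟩)
  rw [A_flatten, ← B_symm Ls (fun y => ‖y‖)]
  set φ : X → ℝ := fun y => max (‖y‖ - c) 0 with hφ
  have h4 : B Ls (fun ys => A ys (fun y => ‖y‖)) ≤ B Ls (fun ys => b * (c + (ys.map φ).sum)) := by
    apply B_mono
    intro ys hys
    have hnn : ∀ z ∈ ys.map φ, 0 ≤ z := by
      intro z hz
      obtain ⟨y, _, rfl⟩ := List.mem_map.1 hz
      exact le_max_right _ _
    have h0 : 0 ≤ (ys.map φ).sum := List.sum_nonneg hnn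
    apply h.scale ys (hys.trans h2) _ (by linarith)
    intro y hy
    have := List.single_le_sum hnn (φ y) (List.mem_map.2 ⟨y, hy, rfl⟩)
    have := le_max_left (‖y‖ - c) 0
    simp only [hφ] at *
    linarith
  refine h4.trans ?_
  rw [B_mul, B_add, B_const, B_sum]
  gcongr
  have : (Ls.map (fun L => A L φ)).sum ≤ (Ls.map (fun L => A L φ)).length • √(m:ℝ) := by
    apply List.sum_le_card_nsmul
    intro z hz
    obtain ⟨L, hL, rfl⟩ := List.mem_map.1 hz
    have := A_excess L (hx' L hL) c (hc L (h3 L hL) (hx' L hL)) (by rw [h3 L hL]; exact hm)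
    rwa [h3 L hL] at this
  simpa [h2] using this

end normed
section typ
variable {X : Type*} [NormedAddCommGroup X]

lemma A_norm_le (l : List X) : A l (fun y => ‖y‖) ≤ (l.map (fun x => ‖x‖)).sum := by
  have : ∀ a : X, A l (fun y => ‖a + y‖) ≤ ‖a‖ + (l.map (fun x => ‖x‖)).sum := by
    induction l with
    | nil => simp [A_nil]
    | cons x l ih =>
      intro a
      have h1 := ih (a + x)
      have h2 := ih (a + -x)
      have h3 := norm_add_le a x
      have h4 := norm_add_le a (-x)
      rw [norm_neg] at h4
      simp only [A_cons, ← add_assoc, List.map_cons, List.sum_cons]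
      linarith
  simpa using this 0

lemma A_append_le (l m : List X) :
    A (l ++ m) (fun y => ‖y‖) ≤ A l (fun y => ‖y‖) + A m (fun y => ‖y‖) := by
  rw [A_append]
  have : ∀ y : X, A m (fun z => ‖y + z‖) ≤ ‖y‖ + A m (fun z => ‖z‖) := by
    intro y
    rw [← A_const m ‖y‖, ← A_add]
    exact A_mono _ fun z => norm_add_le _ _
  refine (A_mono l this).trans ?_
  rw [A_add, A_const]

lemma A_filter_le (l : List X) (P : X → Prop) [DecidablePred P] :
    A l (fun y => ‖y‖) ≤ A (l.filter P) (fun y => ‖y‖) + A (l.filter (fun x => ¬ P x)) (fun y => ‖y‖) := by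
  refine le_trans (le_of_eq ?_) (A_append_le _ _)
  apply A_perm
  have := (List.filter_append_perm (fun x => decide (P x)) l).symm
  simpa using this

variable [NormedSpace ℝ X]

lemma Bd_pow {n : ℕ} (hn : 2 ≤ n) {r : ℝ} (hr0 : 0 < r) (hr : r < 2)
    (h : Bd X n ((n : ℝ) ^ (1 / r))) :
    ∃ D : ℝ, 0 < D ∧ ∀ k : ℕ, Bd X (n ^ k) (D * ((n : ℝ) ^ (1 / r)) ^ k) := by
  have hn1 : (1 : ℝ) < n := by exact_mod_cast hn
  set ρ := (n : ℝ) ^ (1 / r) with hρ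
  set σ := √(n : ℝ) with hσ
  have hσρ : σ < ρ := by
    rw [hσ, Real.sqrt_eq_rpow]
    apply Real.rpow_lt_rpow_of_exponent_lt hn1
    rw [div_lt_div_iff₀ (by norm_num) hr0]; linarith
  have hσ0 : 0 < σ := Real.sqrt_pos.2 (by linarith)
  have hρ0 : 0 < ρ := by linarith
  set E := n * ρ / (ρ - σ) with hE
  have hE0 : 0 < E := div_pos (by positivity) (by linarith)
  have hE1 : E * ρ - E * σ = n * ρ := by
    rw [hE]; have : ρ - σ ≠ 0 := by linarith
    field_simp
  have key : ∀ k : ℕ, Bd X (n ^ k) ((1 + E) * ρ ^ k - E * σ ^ k) := by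
    intro k
    induction k with
    | zero =>
      intro l hl hx
      refine (A_norm_le l).trans ?_
      have := List.sum_le_card_nsmul (l.map (fun x => ‖x‖)) 1 (by
        intro z hz
        obtain ⟨y, hy, rfl⟩ := List.mem_map.1 hz
        exact hx y hy)
      simpa [hl] using this
    | succ k ih =>
      have hpow : σ ^ k ≤ ρ ^ k := pow_le_pow_left₀ hσ0.le hσρ.le k
      have hc0 : 0 < (1 + E) * ρ ^ k - E * σ ^ k := by
        have : 0 < ρ ^ k := by positivity
        nlinarith
      have := Bd.mul (by positivity) hρ0.le hc0 h ih
      have e1 : √((n ^ k : ℕ) : ℝ) = σ ^ k := by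
        rw [Nat.cast_pow, Real.sqrt_eq_iff_eq_sq (by positivity) (by positivity), ← pow_mul,
          mul_comm, pow_mul, hσ, Real.sq_sqrt (by positivity)]
      rw [e1, ← pow_succ'] at this
      convert this using 1
      rw [pow_succ, pow_succ]
      linear_combination (σ ^ k) * hE1
  refine ⟨1 + E, by linarith, fun k l hl hx => (key k l hl hx).trans ?_⟩
  have : 0 < E * σ ^ k := by positivity
  linarith

lemma Bd_all {n : ℕ} (hn : 2 ≤ n) {r : ℝ} (hr0 : 0 < r) (hr : r < 2)
    (h : Bd X n ((n : ℝ) ^ (1 / r))) :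
    ∃ D : ℝ, 0 < D ∧ ∀ N : ℕ, Bd X N (D * (N : ℝ) ^ (1 / r)) := by
  obtain ⟨D, hD, hk⟩ := Bd_pow hn hr0 hr h
  have hn1 : (1 : ℝ) < n := by exact_mod_cast hn
  refine ⟨D * (n : ℝ) ^ (1 / r), by positivity, fun N => ?_⟩
  rcases Nat.eq_zero_or_pos N with rfl | hN
  · intro l hl hx
    rw [List.length_eq_zero_iff] at hl
    subst hl
    simp only [A_nil, norm_zero]
    positivity
  have h1 : N ≤ n ^ (Nat.log n N + 1) := (Nat.lt_pow_succ_log_self (by omega) N).le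
  have h2 : n ^ (Nat.log n N) ≤ N := Nat.pow_log_le_self n (by omega)
  intro l hl hx
  refine ((hk (Nat.log n N + 1)).mono h1 l hl hx).trans ?_
  rw [pow_succ, mul_assoc, mul_comm (_ ^ _) ((n : ℝ) ^ (1 / r))]
  gcongr
  rw [← Real.rpow_natCast, ← Real.rpow_mul (by positivity), mul_comm, Real.rpow_mul (by positivity),
    Real.rpow_natCast]
  apply Real.rpow_le_rpow (by positivity) _ (by positivity)
  exact_mod_cast h2

lemma hasType_of_Bd {D r q : ℝ} (hD : 0 < D) (hr0 : 0 < r) (hq : 0 < q) (hqr : q < r)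
    (h : ∀ N : ℕ, Bd X N (D * (N : ℝ) ^ (1 / r))) : ∃ K, HasTypeWith X q K := by
  set θ : ℝ := 2 ^ (q / r - 1) with hθ
  have hθ0 : 0 < θ := by positivity
  have hθ1 : θ < 1 := by
    apply Real.rpow_lt_one_of_one_lt_of_neg (by norm_num)
    have : q / r < 1 := (div_lt_one hr0).2 hqr
    linarith
  set c : ℝ := D * 2 ^ (q / r) with hc
  have hc0 : 0 < c := by positivity
  classical
  -- bins
  have bins : ∀ (k : ℕ) (l : List X), (l.map (fun x => ‖x‖ ^ q)).sum ≤ 1 →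
      (∀ x ∈ l, (2⁻¹ : ℝ) ^ k < ‖x‖) →
      A l (fun y => ‖y‖) ≤ ∑ j ∈ Finset.range k, c * θ ^ j := by
    intro k
    induction k with
    | zero =>
      intro l hl hx
      cases l with
      | nil => simp [A_nil]
      | cons x l =>
        exfalso
        have hx1 := hx x (by simp)
        rw [pow_zero] at hx1
        have : 1 < ‖x‖ ^ q := Real.one_lt_rpow hx1 hq
        have h0 : 0 ≤ (l.map (fun x => ‖x‖ ^ q)).sum := List.sum_nonneg (by
          intro z hz
          obtain ⟨y, hy, rfl⟩ := List.mem_map.1 hz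
          positivity)
        simp only [List.map_cons, List.sum_cons] at hl
        linarith
    | succ k ih =>
      intro l hl hx
      have sub : ∀ m : List X, m.Sublist l → (m.map (fun x => ‖x‖ ^ q)).sum ≤ 1 := by
        intro m hm
        refine le_trans ?_ hl
        apply List.Sublist.sum_le_sum (hm.map _)
        intro z hz
        obtain ⟨y, hy, rfl⟩ := List.mem_map.1 hz
        positivity
      refine (A_filter_le l (fun x => (2⁻¹ : ℝ) ^ k < ‖x‖)).trans ?_
      rw [Finset.sum_range_succ]
      apply add_le_add
      · apply ih _ (sub _ List.filter_sublist)
        intro x hx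
        simpa using (List.mem_filter.1 hx).2
      · set m := l.filter (fun x => ¬ (2⁻¹ : ℝ) ^ k < ‖x‖) with hm
        have hm1 := sub m List.filter_sublist
        have hm2 : ∀ x ∈ m, ‖x‖ ≤ (2⁻¹ : ℝ) ^ k := by
          intro x hx
          simpa using (List.mem_filter.1 hx).2
        have hm3 : ∀ x ∈ m, (2⁻¹ : ℝ) ^ (k + 1) < ‖x‖ := fun x hxm => hx x (List.mem_filter.1 hxm).1
        have hcard : (m.length : ℝ) * ((2⁻¹ : ℝ) ^ (k + 1)) ^ q ≤ 1 := by
          have := List.card_nsmul_le_sum (m.map (fun x => ‖x‖ ^ q)) (((2⁻¹ : ℝ) ^ (k + 1)) ^ q) (by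
            intro z hz
            obtain ⟨y, hy, rfl⟩ := List.mem_map.1 hz
            exact Real.rpow_le_rpow (by positivity) (hm3 y hy).le hq.le)
          simp only [List.length_map, nsmul_eq_mul] at this
          linarith
        refine (Bd.scale (h m.length) m rfl _ (by positivity) hm2).trans ?_
        have e2 : ((2⁻¹ : ℝ) ^ (k + 1)) ^ q = ((2 : ℝ) ^ ((k + 1) * q))⁻¹ := by
          rw [← Real.rpow_natCast, ← Real.rpow_mul (by norm_num), Real.inv_rpow (by norm_num)]
          push_cast; rfl
        rw [e2, mul_inv_le_iff₀ (by positivity), one_mul] at hcard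
        have e3 : (m.length : ℝ) ^ (1 / r) ≤ (2 : ℝ) ^ ((k + 1) * (q / r)) := by
          refine (Real.rpow_le_rpow (by positivity) hcard (by positivity)).trans (le_of_eq ?_)
          rw [← Real.rpow_mul (by norm_num)]
          congr 1; field_simp
        have e4 : c * θ ^ k = D * (2 : ℝ) ^ ((k + 1) * (q / r)) * (2⁻¹ : ℝ) ^ k := by
          rw [hc, hθ, ← Real.rpow_natCast, ← Real.rpow_natCast, ← Real.rpow_mul (by norm_num),
            Real.inv_rpow (by norm_num), ← Real.rpow_neg (by norm_num), mul_assoc, mul_assoc,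
            ← Real.rpow_add (by norm_num), ← Real.rpow_add (by norm_num)]
          congr 2; ring
        rw [e4]
        gcongr
  have geo : ∀ k : ℕ, ∑ j ∈ Finset.range k, c * θ ^ j ≤ c * (1 - θ)⁻¹ := by
    intro k
    rw [← Finset.mul_sum]
    gcongr
    rw [geom_sum_eq hθ1.ne, ← neg_div_neg_eq, div_eq_mul_inv, neg_sub, neg_sub]
    have h1 : 0 < (1 - θ)⁻¹ := inv_pos.2 (by linarith)
    have h2 : 0 < θ ^ k := by positivity
    nlinarith
  have unit : ∀ l : List X, (l.map (fun x => ‖x‖ ^ q)).sum ≤ 1 →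
      A l (fun y => ‖y‖) ≤ c * (1 - θ)⁻¹ + 1 := by
    intro l hl
    obtain ⟨k, hk⟩ : ∃ k : ℕ, (l.length : ℝ) * (2⁻¹ : ℝ) ^ k ≤ 1 := by
      obtain ⟨k, hk⟩ := exists_pow_lt_of_lt_one (x := 1 / ((l.length : ℝ) + 1)) (y := (2⁻¹ : ℝ))
        (by positivity) (by norm_num)
      refine ⟨k, ?_⟩
      rw [lt_div_iff₀ (by positivity)] at hk
      have : (0:ℝ) < 2⁻¹ ^ k := by positivity
      nlinarith
    refine (A_filter_le l (fun x => (2⁻¹ : ℝ) ^ k < ‖x‖)).trans ?_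
    apply add_le_add
    · refine (bins k _ ?_ ?_).trans (geo k)
      · refine le_trans ?_ hl
        apply List.Sublist.sum_le_sum (List.filter_sublist.map _)
        intro z hz
        obtain ⟨y, hy, rfl⟩ := List.mem_map.1 hz
        positivity
      · intro x hx
        simpa using (List.mem_filter.1 hx).2
    · refine (A_norm_le _).trans ?_
      set m := l.filter (fun x => ¬ (2⁻¹ : ℝ) ^ k < ‖x‖) with hm
      have := List.sum_le_card_nsmul (m.map (fun x => ‖x‖)) ((2⁻¹ : ℝ) ^ k) (by
        intro z hz
        obtain ⟨y, hy, rfl⟩ := List.mem_map.1 hz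
        simpa using (List.mem_filter.1 hy).2)
      simp only [List.length_map, nsmul_eq_mul] at this
      refine this.trans (le_trans ?_ hk)
      gcongr
      exact List.length_filter_le _ _
  refine ⟨c * (1 - θ)⁻¹ + 1, fun n x => ?_⟩
  rw [rad_eq]
  set S := ∑ i, ‖x i‖ ^ q with hS
  have hS0 : 0 ≤ S := Finset.sum_nonneg fun i _ => by positivity
  rcases hS0.eq_or_lt with h0 | hpos
  · have hx0 : ∀ i, x i = 0 := by
      intro i
      have := (Finset.sum_eq_zero_iff_of_nonneg (fun i _ => by positivity)).1 (hS.symm.trans h0.symm) i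
        (Finset.mem_univ i)
      rwa [Real.rpow_eq_zero (norm_nonneg _) hq.ne', norm_eq_zero] at this
    refine (A_norm_le _).trans ?_
    rw [List.map_ofFn, List.sum_ofFn, ← h0, Real.zero_rpow (by positivity)]
    simp [hx0]
  · set s := S ^ (1 / q) with hs
    have hs0 : 0 < s := by positivity
    have hsq : s ^ q = S := by
      rw [hs, ← Real.rpow_mul hS0, one_div_mul_cancel hq.ne', Real.rpow_one]
    have := unit ((List.ofFn x).map (fun y => s⁻¹ • y)) (by
      rw [List.map_map, List.map_ofFn, List.sum_ofFn]
      simp only [Function.comp, norm_smul, norm_inv, Real.norm_eq_abs, abs_of_pos hs0]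
      simp only [Real.mul_rpow (inv_nonneg.2 hs0.le) (norm_nonneg _)]
      rw [← Finset.mul_sum, ← hS, Real.inv_rpow hs0.le, hsq, inv_mul_cancel₀ hpos.ne'])
    rw [A_hom _ _ (by positivity), inv_mul_le_iff₀ hs0] at this
    linarith

end typ
section john
open Module
open scoped InnerProductSpace

lemma john {X : Type*} [NormedAddCommGroup X] [NormedSpace ℝ X]
    (hinf : ¬ FiniteDimensional ℝ X) (N : ℕ) :
    ∃ u : EuclideanSpace ℝ (Fin N) →ₗ[ℝ] X, Function.Injective u ∧ (∀ v, ‖v‖ ≤ ‖u v‖) ∧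
      ∀ S : EuclideanSpace ℝ (Fin N) →L[ℝ] EuclideanSpace ℝ (Fin N),
        (∀ v, ‖S v‖ ≤ ‖u v‖) → |S.det| ≤ 1 := by
  set V := EuclideanSpace ℝ (Fin N)
  have hrank : (N : Cardinal) ≤ Module.rank ℝ X := by
    have : Cardinal.aleph0 ≤ Module.rank ℝ X := by
      by_contra h
      exact hinf (Module.rank_lt_aleph0_iff.1 (not_le.1 h))
    exact Cardinal.natCast_le_aleph0.trans this
  obtain ⟨i0, hi0⟩ := Module.le_rank_iff_exists_linearMap.1 hrank
  let i : V →ₗ[ℝ] X := i0.comp (WithLp.linearEquiv 2 ℝ (Fin N → ℝ)).toLinearMap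
  have hi : Function.Injective i := hi0.comp (WithLp.linearEquiv 2 ℝ (Fin N → ℝ)).injective
  obtain ⟨C, hC⟩ : ∃ C : ℝ, ∀ v : V, ‖i v‖ ≤ C * ‖v‖ :=
    ⟨‖LinearMap.toContinuousLinearMap i‖, fun v => (LinearMap.toContinuousLinearMap i).le_opNorm v⟩
  obtain ⟨c, hc0, hc⟩ := LinearMap.exists_antilipschitzWith i (LinearMap.ker_eq_bot.2 hi)
  let K : Set (V →L[ℝ] V) := {M | ∀ v, ‖M v‖ ≤ ‖i v‖}
  have hKcl : IsClosed K := by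
    have : K = ⋂ v, {M : V →L[ℝ] V | ‖M v‖ ≤ ‖i v‖} := by ext; simp [K]
    rw [this]
    refine isClosed_iInter fun v => isClosed_le ?_ continuous_const
    fun_prop
  have hKb : Bornology.IsBounded K := by
    rw [isBounded_iff_forall_norm_le]
    refine ⟨max C 0, fun M hM => M.opNorm_le_bound (le_max_right _ _) fun v => ?_⟩
    refine (hM v).trans ((hC v).trans ?_)
    gcongr
    exact le_max_left _ _
  have : ProperSpace (V →L[ℝ] V) := FiniteDimensional.proper ℝ _
  have hKc : IsCompact K := Metric.isCompact_of_isClosed_isBounded hKcl hKb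
  have hmem : ((c : ℝ)⁻¹ • ContinuousLinearMap.id ℝ V) ∈ K := by
    intro v
    have := hc.le_mul_dist v 0
    simp only [map_zero, dist_zero_right] at this
    simp only [smul_apply, ContinuousLinearMap.id_apply, norm_smul, norm_inv,
      NNReal.norm_eq]
    rw [inv_mul_le_iff₀ (by exact_mod_cast hc0)]
    exact this
  obtain ⟨M, hMK, hMmax⟩ := hKc.exists_isMaxOn ⟨_, hmem⟩
    (ContinuousLinearMap.continuous_det (𝕜 := ℝ) (E := V)).abs.continuousOn
  have hdet : 0 < |M.det| := by
    refine lt_of_lt_of_le ?_ (hMmax hmem)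
    rw [abs_pos, ContinuousLinearMap.det]
    have : (((c : ℝ)⁻¹ • ContinuousLinearMap.id ℝ V : V →L[ℝ] V) : V →ₗ[ℝ] V)
        = (c : ℝ)⁻¹ • LinearMap.id := rfl
    rw [this, LinearMap.det_smul, LinearMap.det_id]
    have : (c : ℝ) ≠ 0 := by exact_mod_cast hc0.ne'
    positivity
  let e : V ≃ₗ[ℝ] V := LinearMap.equivOfDetNeZero (M : V →ₗ[ℝ] V) (abs_pos.1 hdet)
  have he : ∀ v, e v = M v := fun v => rfl
  refine ⟨i.comp e.symm.toLinearMap, hi.comp e.symm.injective, fun v => ?_, fun S hS => ?_⟩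
  · have := hMK (e.symm v)
    rwa [← he, e.apply_symm_apply] at this
  · have h1 : S.comp M ∈ K := by
      intro v
      have := hS (M v)
      have e0 : e.symm (M v) = v := by rw [← he, e.symm_apply_apply]
      simpa [e0] using this
    have h2 : |(S.comp M).det| ≤ |M.det| := hMmax h1
    have h3 : (S.comp M).det = S.det * M.det := by
      simp only [ContinuousLinearMap.det]
      exact LinearMap.det_comp _ _
    rw [h3, abs_mul] at h2
    exact le_of_mul_le_mul_right (by linarith) hdet

lemma deriv_nonneg_aux {f : ℝ → ℝ} {f' : ℝ} (h : HasDerivAt f f' 0) (h0 : f 0 = 0)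
    (hpos : ∀ t, 0 < t → 0 ≤ f t) : 0 ≤ f' := by
  have := h.tendsto_slope_zero_right
  refine ge_of_tendsto this ?_
  filter_upwards [self_mem_nhdsWithin] with t ht
  have ht' : 0 < t := ht
  simp only [zero_add, h0, sub_zero, smul_eq_mul]
  exact mul_nonneg (inv_nonneg.2 ht'.le) (hpos t ht')

lemma det_expand {N : ℕ} (H : EuclideanSpace ℝ (Fin N) →ₗ[ℝ] EuclideanSpace ℝ (Fin N)) :
    ∃ R : Polynomial ℝ, ∀ t : ℝ, LinearMap.det (1 + t • H) =
      1 + LinearMap.trace ℝ _ H * t + R.eval t * t ^ 2 := by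
  let b := (EuclideanSpace.basisFun (Fin N) ℝ).toBasis
  refine ⟨(Matrix.det (1 + (Polynomial.X : Polynomial ℝ) •
    (LinearMap.toMatrix b b H).map Polynomial.C)).divX.divX, fun t => ?_⟩
  rw [← LinearMap.det_toMatrix b, LinearMap.trace_eq_matrix_trace ℝ b, map_add, map_smul,
    LinearMap.toMatrix_one, Matrix.det_one_add_smul]

lemma trace_le {X : Type*} [NormedAddCommGroup X] [NormedSpace ℝ X] {N : ℕ}
    (u : EuclideanSpace ℝ (Fin N) →ₗ[ℝ] X) (hu : ∀ v, ‖v‖ ≤ ‖u v‖)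
    (hmax : ∀ S : EuclideanSpace ℝ (Fin N) →L[ℝ] EuclideanSpace ℝ (Fin N),
        (∀ v, ‖S v‖ ≤ ‖u v‖) → |S.det| ≤ 1) (c : ℝ) (hc : 0 ≤ c)
    (H : EuclideanSpace ℝ (Fin N) →L[ℝ] EuclideanSpace ℝ (Fin N))
    (hH : ∀ v, ⟪H v, v⟫_ℝ ≤ c * ‖u v‖ ^ 2) :
    LinearMap.trace ℝ _ (H : EuclideanSpace ℝ (Fin N) →ₗ[ℝ] EuclideanSpace ℝ (Fin N)) ≤ c * N := by
  obtain ⟨R, hR⟩ := det_expand (H : EuclideanSpace ℝ (Fin N) →ₗ[ℝ] EuclideanSpace ℝ (Fin N))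
  set τ := LinearMap.trace ℝ _ (H : EuclideanSpace ℝ (Fin N) →ₗ[ℝ] EuclideanSpace ℝ (Fin N))
  set h := ‖H‖ with hh
  have key : ∀ t : ℝ, 0 < t → 1 + τ * t + R.eval t * t ^ 2 ≤ (1 + c * t + h ^ 2 * t ^ 2) ^ N := by
    intro t ht
    set Q := 1 + c * t + h ^ 2 * t ^ 2 with hQ
    have hct : 0 ≤ c * t := by positivity
    have hht : 0 ≤ h ^ 2 * t ^ 2 := by positivity
    have hQ1 : 1 ≤ Q := by linarith
    have hQ0 : 0 < Q := by linarith
    have hS := hmax (Q⁻¹ • (1 + t • H)) (by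
      intro v
      simp only [smul_apply, add_apply,
        one_apply_eq_self, norm_smul, norm_inv, Real.norm_eq_abs, abs_of_pos hQ0]
      rw [inv_mul_le_iff₀ hQ0]
      apply le_of_sq_le_sq _ (by positivity)
      rw [norm_add_sq_real, norm_smul, real_inner_smul_right, real_inner_comm, Real.norm_eq_abs,
        abs_of_pos ht]
      have e1 := hH v
      have e2 : ‖H v‖ ≤ h * ‖u v‖ := (H.le_opNorm v).trans (by gcongr; exact hu v)
      have e3 : ‖H v‖ ^ 2 ≤ (h * ‖u v‖) ^ 2 := pow_le_pow_left₀ (norm_nonneg _) e2 2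
      have e4 : ‖v‖ ^ 2 ≤ ‖u v‖ ^ 2 := pow_le_pow_left₀ (norm_nonneg _) (hu v) 2
      have e5 : 1 + 2 * (c * t) + h ^ 2 * t ^ 2 ≤ Q ^ 2 := by rw [hQ]; nlinarith
      calc _ ≤ ‖u v‖ ^ 2 + 2 * (t * (c * ‖u v‖ ^ 2)) + t ^ 2 * (h * ‖u v‖) ^ 2 := by
            rw [mul_pow]; gcongr
        _ = (1 + 2 * (c * t) + h ^ 2 * t ^ 2) * ‖u v‖ ^ 2 := by ring
        _ ≤ Q ^ 2 * ‖u v‖ ^ 2 := by gcongr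
        _ = _ := by ring)
    have hd : (Q⁻¹ • (1 + t • H) : EuclideanSpace ℝ (Fin N) →L[ℝ] EuclideanSpace ℝ (Fin N)).det
        = (Q⁻¹) ^ N * (1 + τ * t + R.eval t * t ^ 2) := by
      rw [← hR, ContinuousLinearMap.det]
      have := LinearMap.det_smul (Q⁻¹)
        (1 + t • (H : EuclideanSpace ℝ (Fin N) →ₗ[ℝ] EuclideanSpace ℝ (Fin N)))
      rw [finrank_euclideanSpace_fin] at this
      exact this
    rw [hd] at hS
    have := (le_abs_self _).trans hS
    rwa [inv_pow, inv_mul_le_iff₀ (by positivity), mul_one] at this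
  have hderiv : HasDerivAt (fun t : ℝ => (1 + c * t + h ^ 2 * t ^ 2) ^ N -
      (1 + τ * t + R.eval t * t ^ 2)) (c * N - τ) 0 := by
    have a1 : HasDerivAt (fun t : ℝ => 1 + c * t + h ^ 2 * t ^ 2) c 0 := by
      have := (((hasDerivAt_id (0:ℝ)).const_mul c).const_add 1).add
        (((hasDerivAt_id (0:ℝ)).pow 2).const_mul (h ^ 2))
      exact this.congr_deriv (by simp)
    have a2 : HasDerivAt (fun t : ℝ => 1 + τ * t + R.eval t * t ^ 2) τ 0 := by
      have := (((hasDerivAt_id (0:ℝ)).const_mul τ).const_add 1).add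
        ((R.hasDerivAt (0:ℝ)).mul ((hasDerivAt_id (0:ℝ)).pow 2))
      exact this.congr_deriv (by simp)
    have := (a1.pow N).sub a2
    exact this.congr_deriv (by simp; ring)
  have := deriv_nonneg_aux hderiv (by simp) (fun t ht => sub_nonneg.2 (key t ht))
  linarith

lemma select {X : Type*} [NormedAddCommGroup X] [NormedSpace ℝ X] {N : ℕ}
    (u : EuclideanSpace ℝ (Fin N) →ₗ[ℝ] X) (hinj : Function.Injective u) (hu : ∀ v, ‖v‖ ≤ ‖u v‖)
    (hmax : ∀ S : EuclideanSpace ℝ (Fin N) →L[ℝ] EuclideanSpace ℝ (Fin N),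
        (∀ v, ‖S v‖ ≤ ‖u v‖) → |S.det| ≤ 1) (ρ : ℝ) (hρ : 0 ≤ ρ) (k : ℕ)
    (W : Submodule ℝ (EuclideanSpace ℝ (Fin N))) (hW : finrank ℝ W ≤ k)
    (hk : ρ * N < N - k) : ∃ v, ‖u v‖ = 1 ∧ ρ < ‖Wᗮ.starProjection v‖ ^ 2 := by
  by_contra! hcon
  have h1 : ∀ v, ⟪Wᗮ.starProjection v, v⟫_ℝ ≤ ρ * ‖u v‖ ^ 2 := by
    intro v
    have e : ⟪Wᗮ.starProjection v, v⟫_ℝ = ‖Wᗮ.starProjection v‖ ^ 2 := by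
      have := Submodule.re_inner_starProjection_eq_normSq (𝕜 := ℝ) Wᗮ v
      exact this
    rw [e]
    by_cases hv : v = 0
    · simp [hv]
    have huv : u v ≠ 0 := fun h => hv (hinj (by simpa using h))
    have hpos : 0 < ‖u v‖ := norm_pos_iff.2 huv
    have := hcon (‖u v‖⁻¹ • v) (by
      rw [map_smul, norm_smul, norm_inv, norm_norm, inv_mul_cancel₀ hpos.ne'])
    rw [map_smul, norm_smul, norm_inv, norm_norm, mul_pow, inv_pow,
      inv_mul_le_iff₀ (by positivity)] at this
    linarith
  have h2 := trace_le u hu hmax ρ hρ _ h1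
  have hproj : LinearMap.IsProj Wᗮ (Wᗮ.starProjection :
      EuclideanSpace ℝ (Fin N) →ₗ[ℝ] EuclideanSpace ℝ (Fin N)) :=
    ⟨fun x => Wᗮ.starProjection_apply_mem x, fun x hx => Submodule.starProjection_eq_self_iff.2 hx⟩
  rw [hproj.trace] at h2
  have h3 := W.finrank_add_finrank_orthogonal
  rw [finrank_euclideanSpace_fin] at h3
  have h4 : (N : ℝ) = finrank ℝ W + finrank ℝ Wᗮ := by exact_mod_cast h3.symm
  have h5 : (finrank ℝ W : ℝ) ≤ k := by exact_mod_cast hW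
  linarith

lemma dr_list {X : Type*} [NormedAddCommGroup X] [NormedSpace ℝ X] {N : ℕ}
    (u : EuclideanSpace ℝ (Fin N) →ₗ[ℝ] X) (hinj : Function.Injective u) (hu : ∀ v, ‖v‖ ≤ ‖u v‖)
    (hmax : ∀ S : EuclideanSpace ℝ (Fin N) →L[ℝ] EuclideanSpace ℝ (Fin N),
        (∀ v, ‖S v‖ ≤ ‖u v‖) → |S.det| ≤ 1) (n : ℕ) (η : ℝ) (hη0 : 0 < η) (hη1 : η ≤ 1)
    (hN : n < η ^ 2 * N) (k : ℕ) (hk : k ≤ n) :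
    ∃ (l : List (EuclideanSpace ℝ (Fin N))) (W : Submodule ℝ (EuclideanSpace ℝ (Fin N))),
      l.length = k ∧ (∀ v ∈ l, ‖u v‖ ≤ 1) ∧ finrank ℝ W ≤ k ∧
      ∀ (F : EuclideanSpace ℝ (Fin N) → ℝ) (c : ℝ), (∀ s ∈ W, ‖s‖ ≤ k →
        k * (1 - η ^ 2 - 2 * (η * n)) ≤ ‖s‖ ^ 2 → c ≤ F s) → c ≤ A l F := by
  induction k with
  | zero =>
    refine ⟨[], ⊥, rfl, by simp, by simp, fun F c h => ?_⟩
    rw [A_nil]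
    exact h 0 (by simp) (by simp) (by simp)
  | succ k ih =>
    obtain ⟨l, W, hl, hlu, hW, hA⟩ := ih (by omega)
    have hkn : (k : ℝ) + 1 ≤ n := by exact_mod_cast hk
    obtain ⟨v, hv1, hv2⟩ := select u hinj hu hmax (1 - η ^ 2) (by nlinarith) k W hW (by nlinarith)
    have hvn : ‖v‖ ≤ 1 := (hu v).trans hv1.le
    have hpyth := Submodule.norm_sq_eq_add_norm_sq_starProjection v W
    have hvsq : ‖v‖ ^ 2 ≤ 1 := pow_le_one₀ (norm_nonneg _) hvn
    have hQ : ‖W.starProjection v‖ ≤ η := by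
      apply le_of_sq_le_sq _ hη0.le
      linarith
    have hin : ∀ s ∈ W, ‖s‖ ≤ k → |⟪v, s⟫_ℝ| ≤ η * n := by
      intro s hs hsk
      have h0 := Submodule.starProjection_inner_eq_zero (𝕜 := ℝ) (K := W) v s hs
      rw [inner_sub_left, sub_eq_zero] at h0
      rw [h0]
      refine (abs_real_inner_le_norm _ _).trans ?_
      gcongr
      linarith
    refine ⟨v :: l, W ⊔ (ℝ ∙ v), by simp [hl], ?_, ?_, ?_⟩
    · intro w hw
      rcases List.mem_cons.1 hw with rfl | h
      · exact hv1.le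
      · exact hlu w h
    · have h1 := Submodule.finrank_add_le_finrank_add_finrank W (ℝ ∙ v)
      have h2 := finrank_span_le_card (R := ℝ) ({v} : Set (EuclideanSpace ℝ (Fin N)))
      simp only [Set.toFinset_singleton, Finset.card_singleton] at h2
      omega
    · intro F c hF
      have step : ∀ w, (w = v ∨ w = -v) → c ≤ A l (fun y => F (w + y)) := by
        intro w hw
        apply hA
        intro s hs hsk hs2
        have hwn : ‖w‖ = ‖v‖ := by rcases hw with rfl | rfl <;> simp
        have hwi : |⟪w, s⟫_ℝ| ≤ η * n := by
          rcases hw with rfl | rfl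
          · exact hin s hs hsk
          · rw [inner_neg_left, abs_neg]; exact hin s hs hsk
        apply hF
        · apply Submodule.add_mem
          · apply Submodule.mem_sup_right
            rcases hw with rfl | rfl
            · exact Submodule.mem_span_singleton_self _
            · exact Submodule.neg_mem _ (Submodule.mem_span_singleton_self _)
          · exact Submodule.mem_sup_left hs
        · refine (norm_add_le _ _).trans ?_
          push_cast; linarith
        · rw [norm_add_sq_real, hwn]
          have := (abs_le.1 hwi).1
          push_cast
          have h5 : 0 ≤ ‖W.starProjection v‖ ^ 2 := by positivity
          linarith
      have h1 := step v (Or.inl rfl)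
      have h2 := step (-v) (Or.inr rfl)
      rw [A_cons]; linarith

lemma hilbert_case {X : Type*} [NormedAddCommGroup X] [NormedSpace ℝ X]
    (hinf : ¬ FiniteDimensional ℝ X) (n : ℕ) (hn : 1 ≤ n) (δ : ℝ) (hδ : 0 < δ) :
    ∃ x : Fin n → X, (∀ i, ‖x i‖ ≤ 1) ∧ √n / (1 + δ) ≤ rademacherAvg n x := by
  set ε := 1 - 1 / (1 + δ) ^ 2 with hε
  have hε0 : 0 < ε := by
    rw [hε, sub_pos, div_lt_one (by positivity)]; nlinarith
  have hε1 : ε < 1 := by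
    have : 0 < 1 / (1 + δ) ^ 2 := by positivity
    linarith
  have hn' : (1 : ℝ) ≤ n := by exact_mod_cast hn
  set η := ε / (3 * n) with hη
  have hη0 : 0 < η := by positivity
  have hηn : η * n = ε / 3 := by rw [hη]; field_simp
  have hη1 : η ≤ ε / 3 := by nlinarith
  obtain ⟨N, hN⟩ := exists_nat_gt ((n : ℝ) / η ^ 2)
  rw [div_lt_iff₀ (by positivity)] at hN
  obtain ⟨u, hinj, hu, hmax⟩ := john hinf N
  obtain ⟨l, W, hl, hlu, -, hA⟩ := dr_list u hinj hu hmax n η hη0 (by linarith) (by linarith) n le_rfl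
  subst hl
  refine ⟨fun i => u (l.get i), fun i => hlu _ (List.get_mem _ _), ?_⟩
  have hofn : List.ofFn (fun i => u (l.get i)) = l.map u := by
    rw [← Function.comp_def u l.get, ← List.map_ofFn, List.ofFn_get]
  rw [rad_eq, hofn]
  have := A_map u.toAddMonoidHom l (fun y => ‖y‖)
  simp only [LinearMap.toAddMonoidHom_coe] at this
  rw [this]
  refine (hA (fun y => ‖y‖) _ ?_).trans (A_mono l hu)
  intro s _ _ hs
  apply le_of_sq_le_sq _ (norm_nonneg s)
  rw [div_pow, Real.sq_sqrt (by positivity)]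
  refine le_trans ?_ hs
  rw [div_eq_mul_one_div]
  have : η ^ 2 ≤ ε / 3 := by nlinarith
  gcongr
  linarith

end john

lemma first_part {X : Type*} [NormedAddCommGroup X] [NormedSpace ℝ X]
    (hinf : ¬ FiniteDimensional ℝ X) (p : ℝ) (hp : p ∈ Set.Icc (1 : ℝ) 2)
    (hmax : ∀ q : ℝ, p < q → q ≤ 2 → ¬ ∃ K' : ℝ, HasTypeWith X q K')
    (n : ℕ) (hn : 1 ≤ n) (δ : ℝ) (hδ : 0 < δ) :
    ∃ x : Fin n → X, (∀ i, ‖x i‖ ≤ 1) ∧ (n : ℝ) ^ (1 / p) / (1 + δ) ≤ rademacherAvg n x := by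
  obtain ⟨hp1, hp2⟩ := hp
  rcases hp2.eq_or_lt with rfl | hp2
  · rw [← Real.sqrt_eq_rpow]
    exact hilbert_case hinf n hn δ hδ
  rcases hn.eq_or_lt with rfl | hn2
  · simpa using hilbert_case hinf 1 le_rfl δ hδ
  by_contra! hcon
  have hn0 : (0 : ℝ) < n := by positivity
  have hpow : (0 : ℝ) < (n : ℝ) ^ (1 / p) := by positivity
  have hlt : (n : ℝ) ^ (1 / p) / (1 + δ) < (n : ℝ) ^ (1 / p) := div_lt_self hpow (by linarith)
  have hcont : ContinuousAt (fun r : ℝ => (n : ℝ) ^ (1 / r)) p := by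
    apply ContinuousAt.rpow continuousAt_const
    · exact continuousAt_const.div continuousAt_id (by simp; linarith)
    · left; exact hn0.ne'
  have hev : ∀ᶠ r in nhdsWithin p (Set.Ioi p), (n : ℝ) ^ (1 / p) / (1 + δ) < (n : ℝ) ^ (1 / r) :=
    nhdsWithin_le_nhds (hcont.eventually (lt_mem_nhds hlt))
  have hev2 : ∀ᶠ r in nhdsWithin p (Set.Ioi p), r < 2 :=
    nhdsWithin_le_nhds (gt_mem_nhds hp2)
  obtain ⟨r, ⟨hr1, hr2⟩, hr3⟩ := ((hev.and hev2).and self_mem_nhdsWithin).exists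
  have hr3 : p < r := hr3
  have hBd : Bd X n ((n : ℝ) ^ (1 / r)) := by
    intro l hl hx
    subst hl
    have := hcon l.get (fun i => hx _ (List.get_mem _ _))
    rw [rad_eq, List.ofFn_get] at this
    linarith
  obtain ⟨D, hD, hall⟩ := Bd_all (by omega) (by linarith) hr2 hBd
  exact hmax ((p + r) / 2) (by linarith) (by linarith)
    (hasType_of_Bd hD (by linarith) (by linarith) (by linarith) hall)

end RadLB

/-- **Lower-bound half of Lemma 2.7 of the paper (via Maurey–Pisier).**
If `X` is an infinite-dimensional Banach space, `p ∈ [1,2]`, and `X` has no type `q`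
for any `p < q ≤ 2`, then for every `n ≥ 1` and `δ > 0` there are vectors
`x₁, …, xₙ` in the closed unit ball with `𝔼 ‖∑ εᵢ xᵢ‖ ≥ n^{1/p}/(1+δ)`;
consequently `β_n(X) ≥ n^{1/p}`. -/
theorem betaN_lower_bound_of_no_better_type {𝕜 X : Type*} [RCLike 𝕜]
    [NormedAddCommGroup X] [NormedSpace 𝕜 X] [CompleteSpace X]
    (hinf : ¬ FiniteDimensional 𝕜 X)
    (p : ℝ) (hp : p ∈ Set.Icc (1 : ℝ) 2)
    (hmax : ∀ q : ℝ, p < q → q ≤ 2 → ¬ ∃ K' : ℝ, HasTypeWith X q K')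
    (n : ℕ) (hn : 1 ≤ n) (δ : ℝ) (hδ : 0 < δ) :
    (∃ x : Fin n → X, (∀ i, ‖x i‖ ≤ 1) ∧
      (n : ℝ) ^ (1 / p) / (1 + δ) ≤ rademacherAvg n x) ∧
    (n : ℝ) ^ (1 / p) ≤ betaN X n := by
  letI : NormedSpace ℝ X := NormedSpace.restrictScalars ℝ 𝕜 X
  haveI : IsScalarTower ℝ 𝕜 X := ⟨fun a b x => by
    rw [Algebra.smul_def, mul_smul]; rfl⟩
  have hinfR : ¬ FiniteDimensional ℝ X := fun h =>
    hinf (Module.Finite.of_restrictScalars_finite ℝ 𝕜 X)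
  have first : ∀ δ : ℝ, 0 < δ → ∃ x : Fin n → X, (∀ i, ‖x i‖ ≤ 1) ∧
      (n : ℝ) ^ (1 / p) / (1 + δ) ≤ rademacherAvg n x := fun δ hδ =>
    RadLB.first_part hinfR p hp hmax n hn δ hδ
  refine ⟨first δ hδ, ?_⟩
  have hbdd : BddAbove {r : ℝ | ∃ x : Fin n → X, (∀ i, ‖x i‖ ≤ 1) ∧ r = rademacherAvg n x} := by
    refine ⟨n, ?_⟩
    rintro r ⟨x, hx, rfl⟩
    rw [RadLB.rad_eq]
    refine (RadLB.A_norm_le _).trans ?_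
    rw [List.map_ofFn, List.sum_ofFn]
    refine (Finset.sum_le_sum (fun i _ => hx i)).trans ?_
    simp
  have hle : ∀ δ : ℝ, 0 < δ → (n : ℝ) ^ (1 / p) / (1 + δ) ≤ betaN X n := by
    intro δ hδ
    obtain ⟨x, hx, h⟩ := first δ hδ
    exact h.trans (le_csSup hbdd ⟨x, hx, rfl⟩)
  have hβ : 0 ≤ betaN X n := le_trans (by positivity) (hle 1 one_pos)
  apply le_of_forall_pos_le_add
  intro ε hε
  have h1 := hle (ε / (betaN X n + 1)) (by positivity)
  rw [div_le_iff₀ (by positivity)] at h1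
  refine h1.trans ?_
  have h2 : betaN X n * (ε / (betaN X n + 1)) ≤ ε := by
    rw [mul_div_assoc', div_le_iff₀ (by positivity)]
    nlinarith
  linarith
end
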